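/- arXiv:2311.15002 — 2 statements merged into one kernel-verified Lean document; each statement's English description precedes it below -/
import Mathlib

section
/- Let g ≥ 2 be an integer. There exist constants c > 0 and C > 0 depending only on g such that for every real x ≥ 2, |#{(m,n) ∈ 𝒫*(x)² : gcd(m,n)=1} − (1/ζ(2))·∏_{p ∣ g³−g} (1 − 1/p²)^{−1}·(#𝒫*(x))²| ≤ C·(#𝒫*(x))²·e^{−c√(log x)}, where the product is over primes p dividing g³−g. -/
/-!
Write `M = g³ - g`, `X = ⌊x⌋`, and let `N_d` (`Nd g X d`) be the number of elements of `𝒫*(x)`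
divisible by `d`. Möbius inversion gives `∑_{d ≤ X} μ(d) N_d²` for the number of coprime pairs
(`card_coprime_pairs`). Since `N_d = 0` unless `(d, M) = 1`, the expected main term is
`N_1² ∑ μ(d) / d²` over `d` coprime to `M`, and this series is the constant of the theorem
(`tsum_cf`). Everything rests on bounds for `N_d` in three ranges of `d`. Let `m` be of size
`log x`, more precisely `g^{8m} ≤ X < g^{8m+8}`.

A palindrome of even length is divisible by `g + 1`, so the elements of `𝒫*(x)` have odd length. All
but the short ones are given by their leading digits `T` together with a palindromic central window
whose digits are free (`exists_cns`, `Nd_eq`). For fixed `T`, an exponential sum over the windows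
factorises over the digits. Two neighbouring digits together detect the frequency times
`g^e (g² - 1)`, which is why coprimality with `M` is the natural condition. The outcome is a
product `Fd` over the scales `g^{2l}` (`norm_sum_ec_win_le`), which governs the equidistribution of
the palindromes modulo `d` (`window_equidist`, `Nd_equidist`).

* Small `d ≤ g^{2k}`: each nonzero frequency contributes at most `exp (-c m / k)` (`Fd_le_exp`),
  because among any `k` consecutive scales one has its frequency far from the integers. Hence `N_d`
  is close to `N_1 / d` (`small_term`).
* Medium `d`, up to a small power of `x`: the sum of `Fd` over all frequencies is at most
  `3 d^{1/4}` (`exists_sum_Fd_le`, `mid_bound`), so `N_d ≪ √x d^{-3/4}`, and `∑ N_d²` over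
  `d > g^{2k}` saves a power of `g^{2k}`.
* Large `d`: each `T` allows at most one window (`Nd_le_of_large`, `large_bound`), which saves a power
  of `x` in `N_d`. One further factor `N_d` is summed trivially by `∑ |μ(d)| N_d ≤ W N_1`, where
  `W = max 2^{ω(n)}` is smaller than any power of `x` (`sum_moebius_Nd_le`, `omega_bound`).

The lower bound `N_1 ≫ √x` (`le_card_PN`), coming from the palindromes with first and central
digit `1` in which the digits before the centre form a multiple of `g² - 1`, turns these into
relative errors (`core_bound_card`). Taking `k` of size `√m` balances them to `e^{-c √(log x)}` (`decay_bound`).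
-/

open Finset

/-- `𝒫*(x)`: the set of positive integers `n ≤ x` which are palindromes of base `g`
and coprime to `g³ - g`. -/
noncomputable def Pstar (g : ℕ) (x : ℝ) : Finset ℕ :=
  (Finset.Icc 1 ⌊x⌋₊).filter
    (fun n => (Nat.digits g n).reverse = Nat.digits g n ∧ Nat.gcd n (g ^ 3 - g) = 1)

/-! ### Distance to the nearest integer and geometric exponential sums -/

/-- The distance from `t` to the nearest integer. -/
noncomputable def nd (t : ℝ) : ℝ := |t - round t|

lemma nd_nonneg (t : ℝ) : 0 ≤ nd t := abs_nonneg _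

lemma nd_le_half (t : ℝ) : nd t ≤ 1 / 2 := abs_sub_round t

lemma nd_le (t : ℝ) (z : ℤ) : nd t ≤ |t - z| := round_le t z

lemma nd_add_int (t : ℝ) (z : ℤ) : nd (t + z) = nd t := by
  unfold nd; rw [round_add_intCast]; push_cast; congr 1; ring

lemma nd_mul_sub_le (g : ℕ) (t t' : ℝ) : nd (g * t - t') ≤ g * nd t + nd t' := by
  refine (nd_le _ (g * round t - round t')).trans ?_
  push_cast
  have : (g * t - t' - (g * round t - round t') : ℝ) = g * (t - round t) - (t' - round t') := by
    ring
  rw [this]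
  refine (abs_sub _ _).trans ?_
  rw [abs_mul, Nat.abs_cast]; rfl

/-- The additive character `t ↦ e^{2πit}` of `ℝ / ℤ`. -/
noncomputable def ec (t : ℝ) : ℂ := Complex.exp (2 * Real.pi * t * Complex.I)

lemma ec_add (s t : ℝ) : ec (s + t) = ec s * ec t := by
  unfold ec; rw [← Complex.exp_add]; congr 1; push_cast; ring

lemma ec_zero : ec 0 = 1 := by simp [ec]

lemma ec_int (z : ℤ) : ec z = 1 := by
  unfold ec; rw [Complex.exp_eq_one_iff]; exact ⟨z, by push_cast; ring⟩

lemma ec_nat_mul (n : ℕ) (t : ℝ) : ec (n * t) = ec t ^ n := by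
  unfold ec; rw [← Complex.exp_nat_mul]; congr 1; push_cast; ring

lemma norm_ec (t : ℝ) : ‖ec t‖ = 1 := by
  unfold ec
  have : (2 * Real.pi * t * Complex.I : ℂ) = ((2 * Real.pi * t : ℝ) : ℂ) * Complex.I := by
    push_cast; ring
  rw [this, Complex.norm_exp_ofReal_mul_I]

lemma ec_sum {ι : Type*} (s : Finset ι) (f : ι → ℝ) : ec (∑ i ∈ s, f i) = ∏ i ∈ s, ec (f i) := by
  classical
  induction s using Finset.induction_on with
  | empty => simp [ec_zero]
  | insert a s ha ih => rw [sum_insert ha, prod_insert ha, ec_add, ih]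

lemma ec_eq_one_iff (t : ℝ) : ec t = 1 ↔ ∃ z : ℤ, t = z := by
  constructor
  · intro h
    unfold ec at h
    rw [Complex.exp_eq_one_iff] at h
    obtain ⟨n, hn⟩ := h
    refine ⟨n, ?_⟩
    have h2 : (2 * Real.pi * Complex.I : ℂ) ≠ 0 := Complex.two_pi_I_ne_zero
    have : ((t : ℂ)) * (2 * Real.pi * Complex.I) = n * (2 * Real.pi * Complex.I) := by
      rw [← hn]; ring
    have := mul_right_cancel₀ h2 this
    exact_mod_cast this
  · rintro ⟨z, rfl⟩; exact ec_int z

/-- Orthogonality of the additive characters modulo `d`. -/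
lemma sum_ec_div (d : ℕ) (hd : 0 < d) (n : ℤ) :
    ∑ h ∈ range d, ec (h * ((n : ℝ) / d)) = if (d : ℤ) ∣ n then (d : ℂ) else 0 := by
  have hd' : (d : ℝ) ≠ 0 := by positivity
  simp_rw [ec_nat_mul]
  split_ifs with h
  · obtain ⟨k, rfl⟩ := h
    have : ((((d : ℤ) * k : ℤ) : ℝ) / d) = (k : ℤ) := by push_cast; field_simp
    rw [this, ec_int]; simp
  · have h1 : ec ((n : ℝ) / d) ≠ 1 := by
      rw [Ne, ec_eq_one_iff]
      rintro ⟨z, hz⟩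
      apply h
      rw [div_eq_iff hd'] at hz
      exact ⟨z, by have : n = z * d := by exact_mod_cast hz
                   rw [this]; ring⟩
    rw [geom_sum_eq h1, ← ec_nat_mul, mul_div_cancel₀ _ hd', ec_int]; simp

/-- The full digit sum `∑_{a < g} e(aθ)`. -/
noncomputable def dsum (g : ℕ) (t : ℝ) : ℂ := ∑ a ∈ range g, ec (a * t)

lemma norm_dsum_le (g : ℕ) (t : ℝ) : ‖dsum g t‖ ≤ g := by
  unfold dsum
  refine (norm_sum_le _ _).trans ?_
  simp [norm_ec]

lemma norm_one_add_ec (t : ℝ) : ‖1 + ec t‖ ≤ 2 * (1 - 2 * nd t ^ 2) := by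
  have h1 : ec t = ec (t - round t) := by
    have := ec_add (t - round t) (round t)
    rw [ec_int, mul_one] at this
    rw [← this]; congr 1; ring
  set u := t - round t with hu
  have hu2 : |u| ≤ 1 / 2 := abs_sub_round t
  have h2 : ‖1 + ec u‖ = 2 * Real.cos (Real.pi * u) := by
    have e1 : 1 + ec u = 2 * ((Real.cos (Real.pi * u) : ℝ) : ℂ) * ec (u / 2) := by
      have : ((Real.cos (Real.pi * u) : ℝ) : ℂ) = (ec (u / 2) + ec (-(u / 2))) / 2 := by
        rw [Complex.ofReal_cos, Complex.cos]
        unfold ec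
        push_cast
        congr 3 <;> ring
      rw [this]
      have e2 : ec (u / 2) * ec (u / 2) = ec u := by rw [← ec_add]; congr 1; ring
      have e3 : ec (-(u / 2)) * ec (u / 2) = 1 := by
        rw [← ec_add, ← ec_zero]; congr 1; ring
      linear_combination -e2 - e3
    rw [e1, norm_mul, norm_ec, mul_one, norm_mul, Complex.norm_real, Real.norm_eq_abs,
      abs_of_nonneg]
    · simp
    · apply Real.cos_nonneg_of_mem_Icc
      have := abs_le.1 hu2
      constructor <;> nlinarith [Real.pi_pos]
  rw [h1, h2]
  have h3 : Real.cos (Real.pi * u) ≤ 1 - 2 / Real.pi ^ 2 * (Real.pi * u) ^ 2 := by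
    apply Real.cos_le_one_sub_mul_cos_sq
    rw [abs_mul, abs_of_pos Real.pi_pos]
    nlinarith [Real.pi_pos]
  have h4 : 2 / Real.pi ^ 2 * (Real.pi * u) ^ 2 = 2 * nd t ^ 2 := by
    have : nd t = |u| := rfl
    rw [this, sq_abs]
    have := Real.pi_ne_zero
    field_simp
  linarith

/-- Pairing the first two terms of `∑_{a < g} e(aθ)` saves a factor `e^{-4‖θ‖²/g}`. -/
lemma norm_dsum_le_exp (g : ℕ) (hg : 2 ≤ g) (t : ℝ) :
    ‖dsum g t‖ ≤ g * Real.exp (-(4 / g * nd t ^ 2)) := by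
  obtain ⟨k, rfl⟩ : ∃ k, g = 2 + k := ⟨g - 2, by omega⟩
  have h1 : ‖dsum (2 + k) t‖ ≤ 2 * (1 - 2 * nd t ^ 2) + k := by
    unfold dsum
    rw [sum_range_add]
    refine (norm_add_le _ _).trans (add_le_add ?_ ?_)
    · refine le_trans (le_of_eq ?_) (norm_one_add_ec t)
      simp [sum_range_succ, ec_zero]
    · refine (norm_sum_le _ _).trans ?_
      simp [norm_ec]
  refine h1.trans ?_
  have hpos : (0 : ℝ) < ((2 + k : ℕ) : ℝ) := by positivity
  have h2 := Real.add_one_le_exp (-(4 / ((2 + k : ℕ) : ℝ) * nd t ^ 2))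
  have h3 : ((2 + k : ℕ) : ℝ) * (-(4 / ((2 + k : ℕ) : ℝ) * nd t ^ 2) + 1)
      = 2 * (1 - 2 * nd t ^ 2) + k := by
    field_simp
    push_cast; ring
  rw [← h3]
  exact mul_le_mul_of_nonneg_left h2 hpos.le

/-- The exponent `4 / (g(g²+1))` gained from a pair of consecutive digits. -/
noncomputable def kap (g : ℕ) : ℝ := 4 / (g * (g ^ 2 + 1))

lemma kap_pos (g : ℕ) (hg : 2 ≤ g) : 0 < kap g := by
  unfold kap
  have : (0 : ℝ) < g := by positivity
  positivity

lemma norm_dsum_mul_le (g : ℕ) (hg : 2 ≤ g) (t t' : ℝ) :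
    ‖dsum g t‖ * ‖dsum g t'‖ ≤ (g : ℝ) ^ 2 * Real.exp (-(kap g * nd (g * t - t') ^ 2)) := by
  have hgp : (0 : ℝ) < g := by positivity
  have h := mul_le_mul (norm_dsum_le_exp g hg t) (norm_dsum_le_exp g hg t') (norm_nonneg _)
    (by positivity)
  refine h.trans ?_
  rw [show ∀ a b : ℝ, (g * a) * (g * b) = (g : ℝ) ^ 2 * (a * b) by intros; ring, ← Real.exp_add]
  refine mul_le_mul_of_nonneg_left (Real.exp_le_exp.2 ?_) (by positivity)
  have h1 : nd (g * t - t') ^ 2 ≤ ((g : ℝ) ^ 2 + 1) * (nd t ^ 2 + nd t' ^ 2) := by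
    have := nd_mul_sub_le g t t'
    have h0 := nd_nonneg (g * t - t')
    calc nd (g * t - t') ^ 2 ≤ (g * nd t + nd t') ^ 2 := by gcongr
      _ ≤ _ := by nlinarith [sq_nonneg (g * nd t' - nd t)]
  have h2 : kap g * nd (g * t - t') ^ 2 ≤ kap g * (((g : ℝ) ^ 2 + 1) * (nd t ^ 2 + nd t' ^ 2)) :=
    mul_le_mul_of_nonneg_left h1 (kap_pos g hg).le
  have h3 : kap g * (((g : ℝ) ^ 2 + 1) * (nd t ^ 2 + nd t' ^ 2))
      = 4 / g * nd t ^ 2 + 4 / g * nd t' ^ 2 := by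
    unfold kap; field_simp
  linarith

/-! ### Exponential sums over palindromic windows -/

/-- The weight of the `i`-th digit in a palindromic string of width `2s + 1`. -/
def vv (g s i : ℕ) : ℕ := if i < s then g ^ i + g ^ (2 * s - i) else g ^ s

/-- The value of the palindromic string of width `2s + 1` (leading zeros allowed) whose first
`s + 1` digits are given by `a`. -/
def win (g s : ℕ) (a : Fin (s + 1) → Fin g) : ℕ := ∑ i, (a i : ℕ) * vv g s i

/-- The product `∏_{l < m} exp(-κ ‖b g^{2l} / d‖²)` that dominates the normalised exponential sum
over palindromic windows at the frequency `b / d`. -/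
noncomputable def Fd (g d m b : ℕ) : ℝ :=
  ∏ l ∈ range m, Real.exp (-(kap g * nd ((b : ℝ) * (g : ℝ) ^ (2 * l) / d) ^ 2))

lemma prod_range_two_mul {M : Type*} [CommMonoid M] (f : ℕ → M) (m : ℕ) :
    ∏ i ∈ range (2 * m), f i = ∏ l ∈ range m, (f (2 * l) * f (2 * l + 1)) := by
  induction m with
  | zero => simp
  | succ m ih =>
    rw [show 2 * (m + 1) = 2 * m + 1 + 1 by ring, prod_range_succ, prod_range_succ, ih,
      prod_range_succ, mul_assoc]

lemma sum_ec_win (g s J : ℕ) (c0 α : ℝ) :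
    ∑ a : Fin (s + 1) → Fin g, ec (α * (c0 + (g : ℝ) ^ J * (win g s a : ℕ)))
      = ec (α * c0) * ∏ i ∈ range (s + 1), dsum g (α * (g : ℝ) ^ J * vv g s i) := by
  have h1 : ∀ a : Fin (s + 1) → Fin g, ec (α * (c0 + (g : ℝ) ^ J * (win g s a : ℕ)))
      = ec (α * c0) * ∏ i, ec (((a i : ℕ) : ℝ) * (α * (g : ℝ) ^ J * vv g s i)) := by
    intro a
    rw [← ec_sum, ← ec_add]
    congr 1
    unfold win
    push_cast
    rw [mul_add, mul_sum, mul_sum]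
    congr 1
    refine sum_congr rfl fun i _ => ?_
    ring
  simp_rw [h1]
  rw [← mul_sum, ← Fin.prod_univ_eq_prod_range (fun i => dsum g (α * (g : ℝ) ^ J * vv g s i))]
  congr 1
  simp_rw [dsum]
  simp_rw [← Fin.sum_univ_eq_sum_range (fun a => ec ((a : ℝ) * _))]
  rw [Fintype.prod_sum]

/-- Consecutive digits `i, i+1` have weights with `g·vᵢ - vᵢ₊₁` a power of `g` times `g² - 1`, so
a pair of digits detects the frequency `α g^e (g² - 1)`. -/
lemma norm_sum_ec_win_le (g : ℕ) (hg : 2 ≤ g) (m J : ℕ) (c0 α : ℝ) :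
    ‖∑ a : Fin (2 * m + 1) → Fin g, ec (α * (c0 + (g : ℝ) ^ J * (win g (2 * m) a : ℕ)))‖
      ≤ (g : ℝ) ^ (2 * m + 1) * ∏ l ∈ range m, Real.exp (-(kap g *
        nd (α * (g : ℝ) ^ (J + 2 * m + 1 + 2 * l) * ((g : ℝ) ^ 2 - 1)) ^ 2)) := by
  rw [sum_ec_win, norm_mul, norm_ec, one_mul, norm_prod, prod_range_succ, prod_range_two_mul,
    ← prod_range_reflect]
  have h1 : ∏ j ∈ range m, (‖dsum g (α * (g : ℝ) ^ J * vv g (2 * m) (2 * (m - 1 - j)))‖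
        * ‖dsum g (α * (g : ℝ) ^ J * vv g (2 * m) (2 * (m - 1 - j) + 1))‖)
      ≤ ∏ l ∈ range m, ((g : ℝ) ^ 2 * Real.exp (-(kap g *
        nd (α * (g : ℝ) ^ (J + 2 * m + 1 + 2 * l) * ((g : ℝ) ^ 2 - 1)) ^ 2))) := by
    refine prod_le_prod (fun _ _ => by positivity) fun j hj => ?_
    rw [mem_range] at hj
    refine (norm_dsum_mul_le g hg _ _).trans (le_of_eq ?_)
    congr 6
    obtain ⟨k, rfl⟩ : ∃ k, m = j + 1 + k := ⟨m - (j + 1), by omega⟩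
    have e1 : j + 1 + k - 1 - j = k := by omega
    rw [e1]
    unfold vv
    rw [if_pos (by omega), if_pos (by omega),
      show 2 * (2 * (j + 1 + k)) - 2 * k = 4 * j + 2 * k + 4 by omega,
      show 2 * (2 * (j + 1 + k)) - (2 * k + 1) = 4 * j + 2 * k + 3 by omega]
    push_cast
    ring
  have h2 : ∏ l ∈ range m, ((g : ℝ) ^ 2 * Real.exp (-(kap g *
        nd (α * (g : ℝ) ^ (J + 2 * m + 1 + 2 * l) * ((g : ℝ) ^ 2 - 1)) ^ 2)))
      = ((g : ℝ) ^ 2) ^ m * ∏ l ∈ range m, Real.exp (-(kap g *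
        nd (α * (g : ℝ) ^ (J + 2 * m + 1 + 2 * l) * ((g : ℝ) ^ 2 - 1)) ^ 2)) := by
    rw [prod_mul_distrib, prod_const, card_range]
  rw [h2] at h1
  calc _ ≤ (((g : ℝ) ^ 2) ^ m * ∏ l ∈ range m, Real.exp (-(kap g *
        nd (α * (g : ℝ) ^ (J + 2 * m + 1 + 2 * l) * ((g : ℝ) ^ 2 - 1)) ^ 2))) * g :=
        mul_le_mul h1 (norm_dsum_le _ _) (norm_nonneg _) (by positivity)
    _ = _ := by rw [← pow_mul]; ring

lemma cast_cube_sub (g : ℕ) : ((g ^ 3 - g : ℕ) : ℝ) = g * ((g : ℝ) ^ 2 - 1) := by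
  rw [Nat.cast_sub (Nat.le_self_pow (by norm_num) g)]; push_cast; ring

lemma cast_sq_sub (g : ℕ) (hg : 2 ≤ g) : ((g ^ 2 - 1 : ℕ) : ℝ) = (g : ℝ) ^ 2 - 1 := by
  rw [Nat.cast_sub (Nat.one_le_pow _ _ (by omega))]; push_cast; ring

lemma cube_sub_eq (g : ℕ) : g ^ 3 - g = g * (g ^ 2 - 1) := by
  rw [Nat.mul_sub]; ring_nf

lemma cube_sub_pos (g : ℕ) (hg : 2 ≤ g) : 0 < g ^ 3 - g := by
  have : g ^ 1 < g ^ 3 := Nat.pow_lt_pow_right (by omega) (by norm_num)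
  simp at this; omega

/-- A shift of the frequency by a multiple of `1 / (g³ - g)` does not affect the bound. -/
lemma norm_sum_ec_win_le_Fd (g : ℕ) (hg : 2 ≤ g) (m J d h b : ℕ) (c0 : ℝ) :
    ‖∑ a : Fin (2 * m + 1) → Fin g, ec (((h : ℝ) / d + (b : ℝ) / (g ^ 3 - g : ℕ))
        * (c0 + (g : ℝ) ^ J * (win g (2 * m) a : ℕ)))‖
      ≤ (g : ℝ) ^ (2 * m + 1) * Fd g d m (h * (g ^ (J + 2 * m + 1) * (g ^ 2 - 1))) := by
  refine (norm_sum_ec_win_le g hg m J c0 _).trans (le_of_eq ?_)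
  unfold Fd
  congr 1
  refine prod_congr rfl fun l _ => ?_
  congr 4
  have hg0 : (g : ℝ) ≠ 0 := by positivity
  have hg1 : (g : ℝ) ^ 2 - 1 ≠ 0 := by
    have : (2 : ℝ) ≤ g := by exact_mod_cast hg
    nlinarith
  rw [← nd_add_int (_ / _) ((b * g ^ (J + 2 * m + 2 * l) : ℕ) : ℤ)]
  congr 1
  rw [cast_cube_sub]
  push_cast
  rw [cast_sq_sub g hg]
  field_simp
  ring

/-- Fourier expansion of a `0/1` function on `ℤ / M`. -/
lemma indicator_expansion (M : ℕ) (hM : 0 < M) (p : ℕ → Prop) [DecidablePred p]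
    (hp : ∀ n, p (n % M) ↔ p n) :
    ∃ c : ℕ → ℂ, (∀ b, ‖c b‖ ≤ 1) ∧
      ∀ n : ℕ, (if p n then (1 : ℂ) else 0) = ∑ b ∈ range M, c b * ec ((b : ℝ) / M * n) := by
  have hM' : (M : ℂ) ≠ 0 := by exact_mod_cast hM.ne'
  have hMr : (M : ℝ) ≠ 0 := by exact_mod_cast hM.ne'
  refine ⟨fun b => (1 / M : ℂ) * ∑ r ∈ (range M).filter p, ec (-((b : ℝ) / M * r)), ?_, ?_⟩
  · intro b
    rw [norm_mul]
    have h1 : ‖∑ r ∈ (range M).filter p, ec (-((b : ℝ) / M * r))‖ ≤ M := by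
      refine (norm_sum_le _ _).trans ?_
      simp only [norm_ec, sum_const, nsmul_eq_mul, mul_one]
      exact_mod_cast (card_filter_le _ _).trans (card_range M).le
    have h2 : ‖(1 / M : ℂ)‖ = 1 / M := by simp
    rw [h2]
    calc (1 / M : ℝ) * _ ≤ 1 / M * M := by gcongr
      _ = 1 := by field_simp
  · intro n
    simp_rw [mul_assoc, sum_mul]
    rw [← mul_sum, sum_comm]
    have h1 : ∀ r ∈ (range M).filter p,
        ∑ b ∈ range M, ec (-((b : ℝ) / M * r)) * ec ((b : ℝ) / M * n)
        = if r = n % M then (M : ℂ) else 0 := by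
      intro r hr
      have := sum_ec_div M hM ((n : ℤ) - r)
      have h2 : ((M : ℤ) ∣ (n : ℤ) - r) ↔ r = n % M := by
        rw [← Nat.modEq_iff_dvd]
        have hr' := mem_range.1 (mem_filter.1 hr).1
        unfold Nat.ModEq
        rw [Nat.mod_eq_of_lt hr']
      simp only [h2] at this
      rw [← this]
      refine sum_congr rfl fun b _ => ?_
      rw [← ec_add]
      congr 1
      push_cast; field_simp; ring
    rw [sum_congr rfl h1, sum_ite_eq']
    have h3 : n % M ∈ (range M).filter p ↔ p n := by
      rw [mem_filter, hp, mem_range]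
      exact ⟨fun h => h.2, fun h => ⟨Nat.mod_lt _ hM, h⟩⟩
    simp only [h3]
    split_ifs <;> simp [hM']

lemma Fd_mod (g d m b : ℕ) (hd : 0 < d) : Fd g d m (b % d) = Fd g d m b := by
  unfold Fd
  refine prod_congr rfl fun l _ => ?_
  congr 4
  rw [← nd_add_int ((_ % _ : ℕ) * _ / _ : ℝ) ((b / d * g ^ (2 * l) : ℕ) : ℤ)]
  congr 1
  have hd' : (d : ℝ) ≠ 0 := by positivity
  have : (b : ℝ) = (b % d : ℕ) + d * (b / d : ℕ) := by exact_mod_cast (Nat.mod_add_div b d).symm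
  conv_rhs => rw [this]
  generalize b / d = k
  push_cast
  field_simp

lemma sum_mul_unit (d u : ℕ) (hd : 0 < d) (hu : Nat.Coprime u d) (f : ℕ → ℝ)
    (hf : ∀ b, f (b % d) = f b) :
    ∑ h ∈ Ico 1 d, f (h * u) = ∑ h ∈ Ico 1 d, f h := by
  have hmaps : Set.MapsTo (fun h => h * u % d) (Ico 1 d : Finset ℕ) (Ico 1 d : Finset ℕ) := by
    intro h hh
    rw [coe_Ico, Set.mem_Ico] at hh ⊢
    refine ⟨?_, Nat.mod_lt _ hd⟩
    rw [Nat.one_le_iff_ne_zero]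
    intro h0
    have h1 := hu.symm.dvd_of_dvd_mul_right (Nat.dvd_of_mod_eq_zero h0)
    have := Nat.le_of_dvd (by omega) h1
    omega
  have hinj : Set.InjOn (fun h => h * u % d) (Ico 1 d : Finset ℕ) := by
    intro a ha b hb hab
    rw [coe_Ico, Set.mem_Ico] at ha hb
    have h1 : a * u ≡ b * u [MOD d] := hab
    have h2 : a ≡ b [MOD d] := Nat.ModEq.cancel_right_of_coprime hu.symm h1
    exact Nat.ModEq.eq_of_lt_of_lt h2 ha.2 hb.2
  refine sum_nbij (fun h => h * u % d) hmaps hinj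
    (surjOn_of_injOn_of_card_le _ hmaps hinj le_rfl) fun h _ => (hf _).symm

lemma coprime_unit (g d e : ℕ) (hd : Nat.Coprime d (g ^ 3 - g)) :
    Nat.Coprime (g ^ e * (g ^ 2 - 1)) d := by
  rw [cube_sub_eq] at hd
  exact Nat.Coprime.mul_left (Nat.Coprime.pow_left _ (Nat.Coprime.coprime_mul_right_right hd).symm)
    (Nat.Coprime.coprime_mul_left_right hd).symm

/-- Equidistribution modulo `d` of the numbers `c0 + g^J w`, where `w` runs over the palindromic
windows of width `4m + 1` for which `c0 + g^J w` is coprime to `g³ - g`. -/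
lemma window_equidist (g : ℕ) (hg : 2 ≤ g) (m J d c0 : ℕ) (hd0 : 0 < d)
    (hd : Nat.Coprime d (g ^ 3 - g)) :
    |(d : ℝ) * (univ.filter fun a : Fin (2 * m + 1) → Fin g =>
          Nat.gcd (c0 + g ^ J * win g (2 * m) a) (g ^ 3 - g) = 1 ∧
            d ∣ c0 + g ^ J * win g (2 * m) a).card
        - (univ.filter fun a : Fin (2 * m + 1) → Fin g =>
          Nat.gcd (c0 + g ^ J * win g (2 * m) a) (g ^ 3 - g) = 1).card|
      ≤ (g ^ 3 - g : ℕ) * (g : ℝ) ^ (2 * m + 1) * ∑ b ∈ Ico 1 d, Fd g d m b := by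
  set M := g ^ 3 - g with hM
  have hM0 : 0 < M := cube_sub_pos g hg
  obtain ⟨c, hc1, hc2⟩ := indicator_expansion M hM0 (fun n => Nat.gcd n M = 1)
    (fun n => by rw [← Nat.gcd_rec, Nat.gcd_comm])
  set ν : (Fin (2 * m + 1) → Fin g) → ℕ := fun a => c0 + g ^ J * win g (2 * m) a with hν
  have key : ((d : ℂ) * (univ.filter fun a => Nat.gcd (ν a) M = 1 ∧ d ∣ ν a).card
      - (univ.filter fun a => Nat.gcd (ν a) M = 1).card)
      = ∑ h ∈ Ico 1 d, ∑ b ∈ range M, c b * ∑ a, ec (((h : ℝ) / d + (b : ℝ) / M) * (ν a)) := by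
    have e1 : (d : ℂ) * (univ.filter fun a => Nat.gcd (ν a) M = 1 ∧ d ∣ ν a).card
        = ∑ a, (if Nat.gcd (ν a) M = 1 then (1 : ℂ) else 0)
          * ∑ h ∈ range d, ec (h * ((ν a : ℤ) / d : ℝ)) := by
      rw [card_filter]
      push_cast
      rw [mul_sum]
      refine sum_congr rfl fun a _ => ?_
      have := sum_ec_div d hd0 (ν a)
      push_cast at this
      rw [this]
      simp only [Int.natCast_dvd_natCast]
      by_cases h1 : Nat.gcd (ν a) M = 1 <;> by_cases h2 : d ∣ ν a <;> simp [h1, h2]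
    have e2 : ((univ.filter fun a => Nat.gcd (ν a) M = 1).card : ℂ)
        = ∑ a, (if Nat.gcd (ν a) M = 1 then (1 : ℂ) else 0) := by
      rw [card_filter]; push_cast; rfl
    rw [e1, e2, ← sum_sub_distrib]
    have e3 : ∀ a, (if Nat.gcd (ν a) M = 1 then (1 : ℂ) else 0)
          * ∑ h ∈ range d, ec (h * ((ν a : ℤ) / d : ℝ))
          - (if Nat.gcd (ν a) M = 1 then (1 : ℂ) else 0)
        = ∑ h ∈ Ico 1 d, ∑ b ∈ range M, c b * ec (((h : ℝ) / d + (b : ℝ) / M) * (ν a)) := by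
      intro a
      rw [range_eq_Ico, sum_eq_sum_Ico_succ_bot hd0, hc2]
      simp only [Nat.cast_zero, zero_mul, ec_zero, zero_add]
      rw [mul_add, mul_one, add_sub_cancel_left, mul_sum]
      refine sum_congr rfl fun h _ => ?_
      rw [sum_mul]
      refine sum_congr (by rw [range_eq_Ico]) fun b _ => ?_
      rw [mul_assoc, ← ec_add]
      congr 2
      push_cast; ring
    rw [sum_congr rfl fun a _ => e3 a, sum_comm]
    refine sum_congr rfl fun h _ => ?_
    rw [sum_comm]
    refine sum_congr rfl fun b _ => ?_
    rw [mul_sum]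
  have key2 := congrArg norm key
  rw [show ((d : ℂ) * (univ.filter fun a => Nat.gcd (ν a) M = 1 ∧ d ∣ ν a).card
      - (univ.filter fun a => Nat.gcd (ν a) M = 1).card) =
      (((d : ℝ) * (univ.filter fun a => Nat.gcd (ν a) M = 1 ∧ d ∣ ν a).card
      - (univ.filter fun a => Nat.gcd (ν a) M = 1).card : ℝ) : ℂ) by push_cast; rfl,
    Complex.norm_real, Real.norm_eq_abs] at key2
  rw [key2]
  refine (norm_sum_le _ _).trans ?_
  rw [← sum_mul_unit d _ hd0 (coprime_unit g d (J + 2 * m + 1) hd) _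
    (fun b => Fd_mod g d m b hd0), mul_sum]
  refine sum_le_sum fun h _ => ?_
  refine (norm_sum_le _ _).trans ?_
  calc _ ≤ ∑ b ∈ range M, (g : ℝ) ^ (2 * m + 1)
        * Fd g d m (h * (g ^ (J + 2 * m + 1) * (g ^ 2 - 1))) := by
        refine sum_le_sum fun b _ => ?_
        rw [norm_mul]
        have := norm_sum_ec_win_le_Fd g hg m J d h b c0
        rw [← one_mul ((g : ℝ) ^ (2 * m + 1) * _)]
        refine mul_le_mul (hc1 b) ?_ (norm_nonneg _) zero_le_one
        simpa [hν] using this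
    _ = _ := by rw [sum_const, card_range, nsmul_eq_mul]; ring

/-! ### Bounds for the dominating products -/

lemma nd_mul_of_lt (q : ℕ) (hq : 0 < q) (t : ℝ) (h : nd t < 1 / (2 * q)) :
    nd (q * t) = q * nd t := by
  have hq' : (0 : ℝ) < q := by positivity
  have h1 : |(q : ℝ) * t - ((q * round t : ℤ) : ℝ)| = q * nd t := by
    push_cast
    rw [← mul_sub, abs_mul, Nat.abs_cast]; rfl
  have h2 : q * nd t < 1 / 2 := by
    rw [lt_div_iff₀ (by positivity)] at h; linarith
  have h3 : round ((q : ℝ) * t) = q * round t := by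
    have h4 := nd_le_half (q * t)
    have h5 : |((round ((q : ℝ) * t) - q * round t : ℤ) : ℝ)| < 1 := by
      have : ((round ((q : ℝ) * t) - q * round t : ℤ) : ℝ)
          = (q * t - ((q * round t : ℤ) : ℝ)) - (q * t - round ((q : ℝ) * t)) := by
        push_cast; ring
      rw [this]
      refine (abs_sub _ _).trans_lt ?_
      rw [h1]
      change q * nd t + nd (q * t) < 1
      linarith
    have h6 : |round ((q : ℝ) * t) - q * round t| < 1 := by exact_mod_cast h5
    have := Int.abs_lt_one_iff.1 h6
    linarith
  unfold nd at *
  rw [h3]; exact h1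

/-- Among `t, qt, …, q^{k-1}t` one is far from the integers, unless `t` is within `q^{-k}` of
an integer. -/
lemma exists_far (q : ℕ) (hq : 0 < q) (k : ℕ) (t : ℝ) (ht : 1 / (q : ℝ) ^ k ≤ nd t) :
    ∃ e < k, 1 / (2 * q : ℝ) ≤ nd ((q : ℝ) ^ e * t) := by
  by_contra! hcon
  have hq' : (0 : ℝ) < q := by positivity
  have h : ∀ e ≤ k, nd ((q : ℝ) ^ e * t) = (q : ℝ) ^ e * nd t := by
    intro e
    induction e with
    | zero => simp
    | succ e ih =>
      intro he
      rw [pow_succ', mul_assoc, nd_mul_of_lt q hq _ (hcon e (by omega)), ih (by omega)]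
      ring
  have h1 := h k le_rfl
  have h2 := nd_le_half ((q : ℝ) ^ k * t)
  rw [div_le_iff₀ (by positivity)] at ht
  linarith

lemma nd_div_ge (d n : ℕ) (hd : 0 < d) (h : ¬ d ∣ n) : 1 / (d : ℝ) ≤ nd ((n : ℝ) / d) := by
  have hd' : (0 : ℝ) < d := by positivity
  unfold nd
  set z := round ((n : ℝ) / d)
  have h1 : (n : ℝ) / d - z = ((n - z * d : ℤ) : ℝ) / d := by push_cast; field_simp
  rw [h1, abs_div, abs_of_pos hd']
  gcongr
  have h2 : (n - z * d : ℤ) ≠ 0 := by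
    intro h0
    apply h
    have : (d : ℤ) ∣ n := ⟨z, by linarith⟩
    exact_mod_cast this
  exact_mod_cast Int.one_le_abs h2

lemma prod_range_mul_blocks {M : Type*} [CommMonoid M] (f : ℕ → M) (k t : ℕ) :
    ∏ i ∈ range (k * t), f i = ∏ j ∈ range t, ∏ e ∈ range k, f (k * j + e) := by
  induction t with
  | zero => simp
  | succ t ih => rw [mul_add, mul_one, prod_range_add, ih, prod_range_succ]

lemma prod_range_mono_le (f : ℕ → ℝ) (h0 : ∀ i, 0 ≤ f i) (h1 : ∀ i, f i ≤ 1) {m n : ℕ}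
    (h : m ≤ n) : ∏ i ∈ range n, f i ≤ ∏ i ∈ range m, f i := by
  obtain ⟨k, rfl⟩ := Nat.exists_eq_add_of_le h
  rw [prod_range_add]
  exact mul_le_of_le_one_right (prod_nonneg fun _ _ => h0 _)
    (prod_le_one (fun _ _ => h0 _) fun _ _ => h1 _)

/-- The factor of `Fd` at the point `t`. -/
noncomputable def qf (g : ℕ) (t : ℝ) : ℝ := Real.exp (-(kap g * nd t ^ 2))

lemma qf_pos (g : ℕ) (t : ℝ) : 0 < qf g t := Real.exp_pos _

lemma qf_le_one (g : ℕ) (hg : 2 ≤ g) (t : ℝ) : qf g t ≤ 1 := by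
  unfold qf
  rw [Real.exp_le_one_iff, neg_nonpos]
  exact mul_nonneg (kap_pos g hg).le (sq_nonneg _)

lemma Fd_eq (g d m b : ℕ) :
    Fd g d m b = ∏ l ∈ range m, qf g ((b : ℝ) * (g : ℝ) ^ (2 * l) / d) := rfl

/-- A bound for every single nonzero frequency. -/
lemma Fd_le_exp (g : ℕ) (hg : 2 ≤ g) (d m b k : ℕ) (hd0 : 0 < d) (hd : Nat.Coprime d g)
    (hdk : d ≤ (g ^ 2) ^ k) (hb : ¬ d ∣ b) :
    Fd g d m b ≤ Real.exp (-(kap g / (4 * (g : ℝ) ^ 4) * (m / k : ℕ))) := by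
  have hgp : (0 : ℝ) < g := by positivity
  rw [Fd_eq]
  refine (prod_range_mono_le _ (fun _ => (qf_pos _ _).le) (fun _ => qf_le_one g hg _)
    (Nat.mul_div_le m k)).trans ?_
  rw [prod_range_mul_blocks]
  have hblock : ∀ j ∈ range (m / k), ∏ e ∈ range k,
      qf g ((b : ℝ) * (g : ℝ) ^ (2 * (k * j + e)) / d)
      ≤ Real.exp (-(kap g / (4 * (g : ℝ) ^ 4))) := by
    intro j _
    have hnd : ¬ d ∣ b * g ^ (2 * (k * j)) := fun h =>
      hb ((Nat.Coprime.pow_right _ hd).dvd_of_dvd_mul_right h)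
    have h1 := nd_div_ge d _ hd0 hnd
    have h2 : 1 / (((g ^ 2 : ℕ) : ℝ)) ^ k ≤ nd (((b * g ^ (2 * (k * j)) : ℕ) : ℝ) / d) := by
      refine le_trans ?_ h1
      apply one_div_le_one_div_of_le (by positivity)
      exact_mod_cast hdk
    obtain ⟨e, he, h3⟩ := exists_far (g ^ 2) (by positivity) k _ h2
    rw [← mul_prod_erase _ _ (mem_range.2 he)]
    refine (mul_le_of_le_one_right (qf_pos _ _).le
      (prod_le_one (fun _ _ => (qf_pos _ _).le) fun _ _ => qf_le_one g hg _)).trans ?_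
    unfold qf
    rw [Real.exp_le_exp, neg_le_neg_iff]
    have h4 : (((g ^ 2 : ℕ) : ℝ)) ^ e * (((b * g ^ (2 * (k * j)) : ℕ) : ℝ) / d)
        = (b : ℝ) * (g : ℝ) ^ (2 * (k * j + e)) / d := by
      push_cast; ring
    rw [h4] at h3
    push_cast at h3
    have h5 : (1 / (2 * (g : ℝ) ^ 2)) ^ 2 ≤ nd ((b : ℝ) * (g : ℝ) ^ (2 * (k * j + e)) / d) ^ 2 := by
      gcongr
    calc kap g / (4 * (g : ℝ) ^ 4) = kap g * (1 / (2 * (g : ℝ) ^ 2)) ^ 2 := by field_simp; ring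
      _ ≤ _ := mul_le_mul_of_nonneg_left h5 (kap_pos g hg).le
  refine (prod_le_prod (fun _ _ => prod_nonneg fun _ _ => (qf_pos _ _).le) hblock).trans ?_
  rw [prod_const, card_range, ← Real.exp_nat_mul]
  apply le_of_eq; congr 1; ring

lemma sum_range_mul_blocks (f : ℕ → ℝ) (k t : ℕ) :
    ∑ i ∈ range (k * t), f i = ∑ j ∈ range t, ∑ e ∈ range k, f (k * j + e) := by
  induction t with
  | zero => simp
  | succ t ih => rw [mul_add, mul_one, sum_range_add, ih, sum_range_succ]

/-- Summing a product of functions of the digits factorises. -/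
lemma sum_prod_digits (G : ℕ) (hG : 0 < G) (f : ℕ → ℝ) (k : ℕ) :
    ∑ j ∈ range (G ^ k), ∏ e ∈ range k, f (j / G ^ e % G) = (∑ a ∈ range G, f a) ^ k := by
  induction k with
  | zero => simp
  | succ k ih =>
    rw [pow_succ', sum_range_mul_blocks, pow_succ, ← ih, sum_mul]
    refine sum_congr rfl fun j _ => ?_
    rw [mul_sum]
    refine sum_congr rfl fun a ha => ?_
    rw [mem_range] at ha
    rw [prod_range_succ']
    congr 1
    · refine prod_congr rfl fun e _ => ?_
      rw [pow_succ', ← Nat.div_div_eq_div_mul, Nat.mul_add_div hG, Nat.div_eq_of_lt ha, add_zero]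
    · rw [pow_zero, Nat.div_one, Nat.mul_add_mod, Nat.mod_eq_of_lt ha]

/-- Domination of a function of `b / d, G b / d, …` by a function of the base `G` digits of
`b / d`, of which the first `k` determine `b` when `d ≤ G ^ k`. -/
lemma sum_prod_le_digits (G : ℕ) (hG : 0 < G) (f : ℕ → ℝ) (hf : ∀ a, 0 ≤ f a) (d k : ℕ)
    (hd : 0 < d) (hdk : d ≤ G ^ k) :
    ∑ b ∈ range d, ∏ e ∈ range k, f (G ^ (e + 1) * b / d % G) ≤ (∑ a ∈ range G, f a) ^ k := by
  rw [← sum_prod_digits G hG]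
  have h1 : ∀ b ∈ range d, ∏ e ∈ range k, f (G ^ (e + 1) * b / d % G)
      = ∏ e ∈ range k, f ((G ^ k * b / d) / G ^ e % G) := by
    intro b _
    rw [← prod_range_reflect]
    refine prod_congr rfl fun e he => ?_
    rw [mem_range] at he
    obtain ⟨i, rfl⟩ : ∃ i, k = e + 1 + i := ⟨k - (e + 1), by omega⟩
    congr 2
    rw [show e + 1 + i - 1 - e + 1 = i + 1 by omega, Nat.div_div_eq_div_mul,
      show e + 1 + i = (i + 1) + e by ring, pow_add G (i + 1) e, mul_comm d,
      show G ^ (i + 1) * G ^ e * b = G ^ e * (G ^ (i + 1) * b) by ring,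
      Nat.mul_div_mul_left _ _ (by positivity)]
  rw [sum_congr rfl h1]
  have hinj : Set.InjOn (fun b => G ^ k * b / d) (range d : Finset ℕ) := by
    have hmono : StrictMono (fun b => G ^ k * b / d) := by
      apply strictMono_nat_of_lt_succ
      intro b
      rw [Nat.lt_iff_add_one_le, Nat.le_div_iff_mul_le hd, add_mul, one_mul, mul_add, mul_one]
      exact Nat.add_le_add (Nat.div_mul_le_self _ _) hdk
    exact hmono.injective.injOn
  rw [← sum_image (f := fun j => ∏ e ∈ range k, f (j / G ^ e % G)) hinj]
  refine sum_le_sum_of_subset_of_nonneg ?_ fun _ _ _ => prod_nonneg fun _ _ => hf _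
  intro j hj
  rw [mem_image] at hj
  obtain ⟨b, hb, rfl⟩ := hj
  rw [mem_range] at hb ⊢
  rw [Nat.div_lt_iff_lt_mul hd]
  exact Nat.mul_lt_mul_of_pos_left hb (by positivity)

/-- The distance to the nearest integer is bounded below through the first base `G` digit. -/
lemma nd_ge_of_digit (G d n : ℕ) (hd : 0 < d) (hG : 2 ≤ G)
    (h0 : G * n / d % G ≠ 0) (h1 : G * n / d % G ≠ G - 1) : 1 / (G : ℝ) ≤ nd ((n : ℝ) / d) := by
  have hd' : (0 : ℝ) < d := by positivity
  have hG' : (0 : ℝ) < G := by positivity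
  set z := round ((n : ℝ) / d) with hz
  set A := G * n / d with hA
  have hdiv : A / G = n / d := by
    rw [hA, Nat.div_div_eq_div_mul, mul_comm d G, Nat.mul_div_mul_left _ _ (by omega)]
  have hA1 : A * d ≤ G * n := Nat.div_mul_le_self _ _
  have hA2 : G * n < (A + 1) * d := by
    rw [add_mul, one_mul]; exact Nat.lt_div_mul_add hd
  have hAe := Nat.mod_add_div A G
  have hAl : A % G < G := Nat.mod_lt _ (by omega)
  set r := A % G
  set k := A / G
  have hA1' : (A : ℝ) * d ≤ G * n := by exact_mod_cast hA1
  have hA2' : (G : ℝ) * n < (A + 1) * d := by exact_mod_cast hA2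
  have hAe' : (r : ℝ) + G * k = A := by exact_mod_cast hAe
  have hr1 : (1 : ℝ) ≤ r := by exact_mod_cast Nat.one_le_iff_ne_zero.2 h0
  have hr2 : (r : ℝ) + 2 ≤ G := by exact_mod_cast (show r + 2 ≤ G by omega)
  have hlow : (k : ℝ) + 1 / G ≤ n / d := by
    rw [le_div_iff₀ hd', ← mul_le_mul_iff_right₀ hG']
    have : (G : ℝ) * ((k + 1 / G) * d) = (G * k + 1) * d := by field_simp
    rw [this]; nlinarith
  have hup : (n : ℝ) / d ≤ k + 1 - 1 / G := by
    rw [div_le_iff₀ hd', ← mul_le_mul_iff_right₀ hG']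
    have : (G : ℝ) * ((k + 1 - 1 / G) * d) = (G * k + G - 1) * d := by field_simp
    rw [this]; nlinarith
  unfold nd
  rw [← hz]
  rcases le_or_gt z (k : ℤ) with hzk | hzk
  · have : (z : ℝ) ≤ k := by exact_mod_cast hzk
    exact le_trans (by linarith) (le_abs_self _)
  · have : (k : ℝ) + 1 ≤ z := by exact_mod_cast hzk
    exact le_trans (by linarith) (neg_le_abs _)

lemma sum_digit_weight_le (G : ℕ) (hG : 0 < G) :
    ∑ a ∈ range G, (if a = 0 ∨ a = G - 1 then (1 : ℝ) else 1 / G) ≤ 3 := by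
  have hGp : (0 : ℝ) < G := by positivity
  calc ∑ a ∈ range G, (if a = 0 ∨ a = G - 1 then (1 : ℝ) else 1 / G)
      ≤ ∑ a ∈ range G, ((if a = 0 then (1 : ℝ) else 0) + (if a = G - 1 then (1 : ℝ) else 0)
        + 1 / G) := by
        refine sum_le_sum fun a _ => ?_
        have h0 : (0 : ℝ) ≤ 1 / G := by positivity
        by_cases h1 : a = 0
        · rw [if_pos (Or.inl h1), if_pos h1]
          split_ifs <;> linarith
        · by_cases h2 : a = G - 1
          · rw [if_pos (Or.inr h2), if_neg h1, if_pos h2]; linarith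
          · rw [if_neg (by tauto), if_neg h1, if_neg h2]; linarith
    _ ≤ 3 := by
        rw [sum_add_distrib, sum_add_distrib, sum_ite_eq', sum_ite_eq', sum_const,
          card_range, nsmul_eq_mul, mul_one_div_cancel hGp.ne']
        split_ifs <;> norm_num

/-- For small `d` the full sum over the frequencies is at most `3 ^ k`, where `d ≤ g^{8k}`. The
product over `m` scales is cut into `t0` blocks, and the inequality of the arithmetic and geometric
means reduces to a single block with all factors raised to the power `t0`. -/
lemma exists_sum_Fd_le (g : ℕ) (hg : 2 ≤ g) : ∃ t0 : ℕ, 0 < t0 ∧ ∀ d k m : ℕ, 0 < d →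
    Nat.Coprime d g → d ≤ (g ^ 8) ^ k → 4 * (k * t0) ≤ m →
    ∑ b ∈ Ico 1 d, Fd g d m b ≤ 3 ^ k := by
  obtain ⟨G, hG⟩ : ∃ G, G = g ^ 8 := ⟨_, rfl⟩
  rw [← hG]
  have hG2 : 2 ≤ G := hG ▸ hg.trans (Nat.le_self_pow (by norm_num) g)
  have hGp : (0 : ℝ) < G := by positivity
  have hκ := kap_pos g hg
  obtain ⟨t0, ht0⟩ := exists_nat_gt ((G : ℝ) ^ 2 * Real.log G / kap g)
  have hlogG : 0 < Real.log G := Real.log_pos (by exact_mod_cast hG2)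
  have ht0pos : (0 : ℝ) < t0 := lt_trans (by positivity) ht0
  have ht0' : 0 < t0 := by exact_mod_cast ht0pos
  have hsmall : Real.exp (-(kap g * (1 / (G : ℝ)) ^ 2 * t0)) ≤ 1 / G := by
    rw [one_div (G : ℝ), ← Real.exp_log (inv_pos.2 hGp), Real.log_inv, Real.exp_le_exp,
      Real.exp_neg, Real.exp_log hGp, neg_le_neg_iff]
    rw [div_lt_iff₀ hκ] at ht0
    have : kap g * (G : ℝ)⁻¹ ^ 2 * t0 = (t0 * kap g) / (G : ℝ) ^ 2 := by field_simp
    rw [this, le_div_iff₀ (by positivity)]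
    linarith
  refine ⟨t0, ht0', fun d k m hd hcop hdk hm => ?_⟩
  set F : ℕ → ℝ := fun b => ∏ e ∈ range k, qf g ((b : ℝ) * (G : ℝ) ^ e / d) with hF
  have hFpos : ∀ b, 0 ≤ F b := fun b => prod_nonneg fun _ _ => (qf_pos _ _).le
  have hFmod : ∀ b, F (b % d) = F b := by
    intro b
    rw [hF]
    refine prod_congr rfl fun l _ => ?_
    unfold qf
    congr 4
    rw [← nd_add_int ((_ % _ : ℕ) * _ / _ : ℝ) ((b / d * G ^ l : ℕ) : ℤ)]
    congr 1
    have hd' : (d : ℝ) ≠ 0 := by positivity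
    have : (b : ℝ) = (b % d : ℕ) + d * (b / d : ℕ) := by
      exact_mod_cast (Nat.mod_add_div b d).symm
    conv_rhs => rw [this]
    generalize b / d = k
    push_cast
    field_simp
  have hsplit : ∀ b, Fd g d m b ≤ ∏ j ∈ range t0, F (b * G ^ (k * j)) := by
    intro b
    rw [Fd_eq]
    refine (prod_range_mono_le _ (fun _ => (qf_pos _ _).le) (fun _ => qf_le_one g hg _)
      hm).trans ?_
    rw [prod_range_mul_blocks]
    have h1 : ∀ i ∈ range (k * t0), ∏ e ∈ range 4, qf g ((b : ℝ) * (g : ℝ) ^ (2 * (4 * i + e)) / d)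
        ≤ qf g ((b : ℝ) * (G : ℝ) ^ i / d) := by
      intro i _
      rw [← mul_prod_erase _ _ (mem_range.2 (show 0 < 4 by norm_num))]
      refine (mul_le_of_le_one_right (qf_pos _ _).le
        (prod_le_one (fun _ _ => (qf_pos _ _).le) fun _ _ => qf_le_one g hg _)).trans
        (le_of_eq ?_)
      congr 3
      rw [hG]; push_cast; rw [← pow_mul]; congr 1; ring
    refine (prod_le_prod (fun _ _ => prod_nonneg fun _ _ => (qf_pos _ _).le) h1).trans
      (le_of_eq ?_)
    rw [prod_range_mul_blocks]
    refine prod_congr rfl fun j _ => ?_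
    rw [hF]
    refine prod_congr rfl fun e _ => ?_
    congr 2
    push_cast; ring
  have hamgm : ∀ b, Fd g d m b ≤ ∑ j ∈ range t0, (1 / t0 : ℝ) * F (b * G ^ (k * j)) ^ t0 := by
    intro b
    refine (hsplit b).trans ?_
    have := Real.geom_mean_le_arith_mean_weighted (range t0) (fun _ => (1 / t0 : ℝ))
      (fun j => F (b * G ^ (k * j)) ^ t0) (fun _ _ => by positivity)
      (by simp [ht0'.ne']) (fun _ _ => pow_nonneg (hFpos _) _)
    refine le_trans (le_of_eq (prod_congr rfl fun j _ => ?_)) this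
    rw [one_div, Real.pow_rpow_inv_natCast (hFpos _) ht0'.ne']
  have hsum : ∀ j ∈ range t0, ∑ b ∈ Ico 1 d, (1 / t0 : ℝ) * F (b * G ^ (k * j)) ^ t0
      = (1 / t0 : ℝ) * ∑ b ∈ Ico 1 d, F b ^ t0 := by
    intro j _
    rw [← mul_sum, sum_mul_unit d (G ^ (k * j)) hd ?_ (fun b => F b ^ t0)
      (fun b => by simp only [hFmod])]
    rw [hG, ← pow_mul]
    exact Nat.Coprime.pow_left _ hcop.symm
  calc ∑ b ∈ Ico 1 d, Fd g d m b
      ≤ ∑ b ∈ Ico 1 d, ∑ j ∈ range t0, (1 / t0 : ℝ) * F (b * G ^ (k * j)) ^ t0 :=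
        sum_le_sum fun b _ => hamgm b
    _ = ∑ b ∈ Ico 1 d, F b ^ t0 := by
        rw [sum_comm, sum_congr rfl hsum, sum_const, card_range, nsmul_eq_mul]
        field_simp
    _ ≤ ∑ b ∈ range d, F b ^ t0 := by
        refine sum_le_sum_of_subset_of_nonneg (fun b hb => ?_) fun _ _ _ => pow_nonneg (hFpos _) _
        rw [mem_Ico] at hb; exact mem_range.2 hb.2
    _ ≤ ∑ b ∈ range d, ∏ e ∈ range k,
          (fun a => if a = 0 ∨ a = G - 1 then (1 : ℝ) else 1 / G) (G ^ (e + 1) * b / d % G) := by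
        refine sum_le_sum fun b _ => ?_
        rw [hF]
        simp only
        rw [← prod_pow]
        refine prod_le_prod (fun _ _ => pow_nonneg (qf_pos _ _).le _) fun e _ => ?_
        split_ifs with hdig
        · exact pow_le_one₀ (qf_pos _ _).le (qf_le_one g hg _)
        · push Not at hdig
          have h := nd_ge_of_digit G d (b * G ^ e) hd hG2
          rw [show G * (b * G ^ e) = G ^ (e + 1) * b by ring] at h
          have h := h hdig.1 hdig.2
          refine le_trans ?_ hsmall
          unfold qf
          rw [← Real.exp_nat_mul, Real.exp_le_exp]
          push_cast at h
          have h5 : (1 / (G : ℝ)) ^ 2 ≤ nd ((b : ℝ) * (G : ℝ) ^ e / d) ^ 2 := by gcongr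
          have h6 := mul_le_mul_of_nonneg_left h5 (mul_pos hκ ht0pos).le
          linarith
    _ ≤ (∑ a ∈ range G, if a = 0 ∨ a = G - 1 then (1 : ℝ) else 1 / G) ^ k := by
        exact sum_prod_le_digits G (by omega) (fun a => if a = 0 ∨ a = G - 1 then (1 : ℝ) else 1 / G)
          (fun a => by split_ifs <;> positivity) d k hd hdk
    _ ≤ 3 ^ k := pow_le_pow_left₀ (sum_nonneg fun a _ => by split_ifs <;> positivity)
        (sum_digit_weight_le G (by omega)) k

/-! ### Decomposition of palindromes into outer digits and a free central window -/

/-- The number of base `g` digits. -/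
def len (g n : ℕ) : ℕ := (Nat.digits g n).length

/-- The digit string of the palindromic window with first half `a`. -/
def midl (g s : ℕ) (a : Fin (s + 1) → Fin g) : List ℕ :=
  List.ofFn fun i : Fin (2 * s + 1) => ((a ⟨min (i : ℕ) (2 * s - i), by omega⟩ : Fin g) : ℕ)

lemma ofDigits_ofFn (g n : ℕ) (f : Fin n → ℕ) :
    Nat.ofDigits g (List.ofFn f) = ∑ i, f i * g ^ (i : ℕ) := by
  induction n with
  | zero => simp
  | succ n ih =>
    rw [List.ofFn_succ, Nat.ofDigits_cons, ih, Fin.sum_univ_succ, mul_sum]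
    simp only [Fin.val_zero, pow_zero, mul_one, Fin.val_succ]
    congr 1
    refine sum_congr rfl fun i _ => ?_
    ring

lemma ofDigits_midl (g s : ℕ) (a : Fin (s + 1) → Fin g) :
    Nat.ofDigits g (midl g s a) = win g s a := by
  set b : ℕ → ℕ := fun i => if h : i < s + 1 then (a ⟨i, h⟩ : ℕ) else 0 with hb
  unfold midl win
  rw [ofDigits_ofFn]
  have h1 : ∑ i : Fin (2 * s + 1), ((a ⟨min (i : ℕ) (2 * s - i), by omega⟩ : Fin g) : ℕ) * g ^ (i : ℕ)
      = ∑ i ∈ range (2 * s + 1), b (min i (2 * s - i)) * g ^ i := by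
    rw [← Fin.sum_univ_eq_sum_range (fun i => b (min i (2 * s - i)) * g ^ i)]
    refine sum_congr rfl fun i _ => ?_
    rw [hb]
    simp only
    rw [dif_pos (by omega)]
  have h2 : ∑ i : Fin (s + 1), (a i : ℕ) * vv g s i = ∑ i ∈ range (s + 1), b i * vv g s i := by
    rw [← Fin.sum_univ_eq_sum_range (fun i => b i * vv g s i)]
    refine sum_congr rfl fun i _ => ?_
    rw [hb]
    simp only
    rw [dif_pos i.2]
  rw [h1, h2, show 2 * s + 1 = s + 1 + s by ring, sum_range_add, sum_range_succ, sum_range_succ,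
    ← sum_range_reflect (fun x => b (min (s + 1 + x) (2 * s - (s + 1 + x))) * g ^ (s + 1 + x))]
  have h3 : ∀ i ∈ range s, b (min i (2 * s - i)) * g ^ i
      + b (min (s + 1 + (s - 1 - i)) (2 * s - (s + 1 + (s - 1 - i)))) * g ^ (s + 1 + (s - 1 - i))
      = b i * vv g s i := by
    intro i hi
    rw [mem_range] at hi
    unfold vv
    rw [if_pos hi, show min i (2 * s - i) = i by omega,
      show min (s + 1 + (s - 1 - i)) (2 * s - (s + 1 + (s - 1 - i))) = i by omega,
      show s + 1 + (s - 1 - i) = 2 * s - i by omega]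
    ring
  rw [← sum_congr rfl h3, sum_add_distrib]
  have h4 : vv g s s = g ^ s := by unfold vv; simp
  rw [h4, show min s (2 * s - s) = s by omega]
  ring

lemma length_midl (g s : ℕ) (a : Fin (s + 1) → Fin g) : (midl g s a).length = 2 * s + 1 := by
  simp [midl]

lemma reverse_midl (g s : ℕ) (a : Fin (s + 1) → Fin g) : (midl g s a).reverse = midl g s a := by
  apply List.ext_getElem (by simp)
  intro i h1 h2
  rw [length_midl] at h2
  rw [List.getElem_reverse]
  simp only [midl, List.getElem_ofFn, List.length_ofFn]
  congr 3
  omega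

lemma midl_lt (g s : ℕ) (a : Fin (s + 1) → Fin g) : ∀ l ∈ midl g s a, l < g := by
  intro l hl
  unfold midl at hl
  rw [List.mem_ofFn] at hl
  obtain ⟨i, rfl⟩ := hl
  exact (a _).2

lemma midl_injective (g s : ℕ) : Function.Injective (midl g s) := by
  intro a b hab
  funext i
  have h1 : (i : ℕ) < (midl g s a).length := by rw [length_midl]; omega
  have h2 : (i : ℕ) < (midl g s b).length := by rw [length_midl]; omega
  have h : (midl g s a)[(i : ℕ)] = (midl g s b)[(i : ℕ)] := by simp only [hab]
  have e : (⟨min (i : ℕ) (2 * s - i), by omega⟩ : Fin (s + 1)) = i := by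
    apply Fin.ext
    change min (i : ℕ) (2 * s - i) = i
    omega
  simp only [midl, List.getElem_ofFn, e] at h
  exact Fin.ext h

lemma exists_midl (g s : ℕ) (L : List ℕ) (hlen : L.length = 2 * s + 1) (hrev : L.reverse = L)
    (hlt : ∀ l ∈ L, l < g) : ∃ a, midl g s a = L := by
  refine ⟨fun i => ⟨L[(i : ℕ)]'(by omega), hlt _ (List.getElem_mem _)⟩, ?_⟩
  apply List.ext_getElem (by rw [length_midl, hlen])
  intro i h1 h2
  simp only [midl, List.getElem_ofFn]
  rcases le_total i (2 * s - i) with h | h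
  · simp only [min_eq_left h]
  · simp only [min_eq_right h]
    have h3 : i < L.reverse.length := by simpa using h2
    have h4 : L.reverse[i] = L[i] := by simp only [hrev]
    rw [← h4, List.getElem_reverse]
    congr 1
    omega

lemma win_injective (g s : ℕ) (hg : 2 ≤ g) : Function.Injective (win g s) := by
  intro a b hab
  rw [← ofDigits_midl, ← ofDigits_midl] at hab
  exact midl_injective g s (Nat.ofDigits_inj_of_len_eq (by omega)
    (by rw [length_midl, length_midl]) (midl_lt g s a) (midl_lt g s b) hab)

lemma win_lt (g s : ℕ) (hg : 2 ≤ g) (a : Fin (s + 1) → Fin g) : win g s a < g ^ (2 * s + 1) := by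
  rw [← ofDigits_midl, ← length_midl g s a]
  exact Nat.ofDigits_lt_base_pow_length (by omega) (midl_lt g s a)

/-- The number obtained by reversing the digits of `T`. -/
def revd (g T : ℕ) : ℕ := Nat.ofDigits g (Nat.digits g T).reverse

/-- The contribution of the outer digits to a palindrome with leading digits `T` and a central
window of width `2s + 1`. -/
def outer (g s T : ℕ) : ℕ := revd g T + g ^ (len g T + 2 * s + 1) * T

/-- The palindrome with leading digits `T` and central window `a`. -/
def cns (g s T : ℕ) (a : Fin (s + 1) → Fin g) : ℕ := outer g s T + g ^ len g T * win g s a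

lemma revd_lt (g T : ℕ) (hg : 2 ≤ g) : revd g T < g ^ len g T := by
  have := Nat.ofDigits_lt_base_pow_length (b := g) (l := (Nat.digits g T).reverse) (by omega)
    (fun x hx => Nat.digits_lt_base (by omega) (List.mem_reverse.1 hx))
  rwa [List.length_reverse] at this

lemma cns_eq_ofDigits (g s T : ℕ) (a : Fin (s + 1) → Fin g) :
    cns g s T a = Nat.ofDigits g ((Nat.digits g T).reverse ++ midl g s a ++ Nat.digits g T) := by
  rw [Nat.ofDigits_append, Nat.ofDigits_append, ofDigits_midl, Nat.ofDigits_digits,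
    List.length_append, List.length_reverse, length_midl]
  unfold cns outer revd len
  ring

lemma digits_cns (g s T : ℕ) (hg : 2 ≤ g) (hT : 1 ≤ T) (a : Fin (s + 1) → Fin g) :
    Nat.digits g (cns g s T a)
      = (Nat.digits g T).reverse ++ midl g s a ++ Nat.digits g T := by
  have hne : Nat.digits g T ≠ [] := Nat.digits_ne_nil_iff_ne_zero.2 (by omega)
  rw [cns_eq_ofDigits, Nat.digits_ofDigits g (by omega)]
  · intro l hl
    simp only [List.mem_append, List.mem_reverse] at hl
    rcases hl with (h | h) | h
    · exact Nat.digits_lt_base (by omega) h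
    · exact midl_lt g s a l h
    · exact Nat.digits_lt_base (by omega) h
  · intro h
    rw [List.getLast_append_of_ne_nil _ hne]
    exact Nat.getLast_digit_ne_zero g (by omega)

lemma cns_pal (g s T : ℕ) (hg : 2 ≤ g) (hT : 1 ≤ T) (a : Fin (s + 1) → Fin g) :
    (Nat.digits g (cns g s T a)).reverse = Nat.digits g (cns g s T a) := by
  rw [digits_cns g s T hg hT]
  simp [reverse_midl]

lemma len_cns (g s T : ℕ) (hg : 2 ≤ g) (hT : 1 ≤ T) (a : Fin (s + 1) → Fin g) :
    len g (cns g s T a) = 2 * (len g T + s) + 1 := by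
  unfold len
  rw [digits_cns g s T hg hT]
  simp [length_midl]; ring

lemma cns_lt (g s T : ℕ) (hg : 2 ≤ g) (a : Fin (s + 1) → Fin g) :
    cns g s T a < (T + 1) * g ^ (len g T + 2 * s + 1) := by
  unfold cns outer
  have h1 := revd_lt g T hg
  have h2 := win_lt g s hg a
  have h3 : g ^ len g T * (win g s a + 1) ≤ g ^ len g T * g ^ (2 * s + 1) :=
    Nat.mul_le_mul_left _ h2
  rw [← pow_add, ← add_assoc] at h3
  nlinarith

lemma le_cns (g s T : ℕ) (a : Fin (s + 1) → Fin g) :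
    T * g ^ (len g T + 2 * s + 1) ≤ cns g s T a := by
  unfold cns outer
  nlinarith [Nat.zero_le (revd g T), Nat.zero_le (g ^ len g T * win g s a)]

lemma cns_div (g s T : ℕ) (hg : 2 ≤ g) (a : Fin (s + 1) → Fin g) :
    cns g s T a / g ^ (len g T + 2 * s + 1) = T :=
  Nat.div_eq_of_lt_le (le_cns g s T a) (cns_lt g s T hg a)

lemma cns_injective (g s T : ℕ) (hg : 2 ≤ g) : Function.Injective (cns g s T) := by
  intro a b hab
  unfold cns at hab
  have h : g ^ len g T * win g s a = g ^ len g T * win g s b := by omega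
  exact win_injective g s hg (Nat.eq_of_mul_eq_mul_left (by positivity) h)

/-- The leading digits of a palindrome outside its central window of width `2s + 1`. -/
def Tof (g s n : ℕ) : ℕ := n / g ^ (len g n / 2 + s + 1)

lemma Tof_cns (g s T : ℕ) (hg : 2 ≤ g) (hT : 1 ≤ T) (a : Fin (s + 1) → Fin g) :
    Tof g s (cns g s T a) = T := by
  unfold Tof
  rw [len_cns g s T hg hT, show (2 * (len g T + s) + 1) / 2 + s + 1 = len g T + 2 * s + 1 by omega,
    cns_div g s T hg]

lemma exists_cns (g s n : ℕ) (hg : 2 ≤ g) (hpal : (Nat.digits g n).reverse = Nat.digits g n)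
    (hodd : Odd (len g n)) (hlong : 2 * s + 1 < len g n) :
    1 ≤ Tof g s n ∧ ∃ a, cns g s (Tof g s n) a = n := by
  obtain ⟨r, hr⟩ := hodd
  set L := Nat.digits g n with hL
  have hlen : L.length = 2 * r + 1 := hr
  obtain ⟨J, rfl⟩ : ∃ J, r = J + s := ⟨r - s, by omega⟩
  have hJ : 0 < J := by omega
  have hTof : Tof g s n = n / g ^ (J + 2 * s + 1) := by
    unfold Tof; rw [hr]; congr 2; omega
  have hn0 : n ≠ 0 := by
    rintro rfl
    simp [len] at hr
  have hLne : L ≠ [] := Nat.digits_ne_nil_iff_ne_zero.2 hn0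
  have hdropne : L.drop (J + 2 * s + 1) ≠ [] := by
    rw [Ne, List.drop_eq_nil_iff]; omega
  have hLlt : ∀ x ∈ L, x < g := fun x hx => Nat.digits_lt_base (by omega) hx
  have hT : n / g ^ (J + 2 * s + 1) = Nat.ofDigits g (L.drop (J + 2 * s + 1)) :=
    Nat.self_div_pow_eq_ofDigits_drop _ _ hg
  have hTd : Nat.digits g (n / g ^ (J + 2 * s + 1)) = L.drop (J + 2 * s + 1) := by
    rw [hT, Nat.digits_ofDigits g (by omega) _ (fun x hx => hLlt x (List.mem_of_mem_drop hx))]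
    intro h
    rw [List.getLast_drop]
    exact Nat.getLast_digit_ne_zero g hn0
  set T := n / g ^ (J + 2 * s + 1) with hTdef
  rw [hTof]
  refine ⟨?_, ?_⟩
  · rw [Nat.one_le_iff_ne_zero]
    intro h0
    rw [h0] at hTd
    simp at hTd
    omega
  · have hmidrev : ((L.drop J).take (2 * s + 1)).reverse = (L.drop J).take (2 * s + 1) := by
      rw [List.reverse_take, List.reverse_drop, hpal, List.drop_take]
      simp only [List.length_drop, hlen]
      congr 2 <;> omega
    obtain ⟨a, ha⟩ := exists_midl g s ((L.drop J).take (2 * s + 1))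
      (by simp [hlen]; omega) hmidrev
      (fun x hx => hLlt x (List.mem_of_mem_drop (List.mem_of_mem_take hx)))
    refine ⟨a, ?_⟩
    rw [cns_eq_ofDigits, hTd, ha, List.reverse_drop, hpal, hlen,
      show 2 * (J + s) + 1 - (J + 2 * s + 1) = J by omega]
    have : L.take J ++ (L.drop J).take (2 * s + 1) ++ L.drop (J + 2 * s + 1) = L := by
      rw [List.append_assoc, show J + 2 * s + 1 = J + (2 * s + 1) by ring, ← List.drop_drop,
        List.take_append_drop, List.take_append_drop]
    rw [this, hL, Nat.ofDigits_digits]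

/-- A palindrome with an even number of digits is divisible by `g + 1`. -/
lemma dvd_of_even_palindrome (g n : ℕ) (hpal : (Nat.digits g n).reverse = Nat.digits g n)
    (h : Even (len g n)) : g + 1 ∣ n := by
  have t := Nat.dvd_iff_dvd_ofDigits (g + 1) g (-1 : ℤ) (by push_cast; exact ⟨1, by ring⟩) n
  rw [Nat.ofDigits_neg_one] at t
  let dig := (Nat.digits g n).map fun n : ℕ => (n : ℤ)
  replace h : Even dig.length := by rw [List.length_map]; exact h
  refine t.2 ⟨0, (?_ : dig.alternatingSum = 0)⟩
  have := dig.alternatingSum_reverse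
  rw [← List.map_reverse, hpal, pow_succ', h.neg_one_pow, mul_one, neg_one_zsmul] at this
  exact eq_zero_of_neg_eq this.symm

lemma odd_len (g n : ℕ) (hpal : (Nat.digits g n).reverse = Nat.digits g n)
    (hco : Nat.gcd n (g ^ 3 - g) = 1) (hg : 2 ≤ g) : Odd (len g n) := by
  rw [← Nat.not_even_iff_odd]
  intro h
  have h1 := dvd_of_even_palindrome g n hpal h
  have h2 : g + 1 ∣ g ^ 3 - g := by
    rw [cube_sub_eq, show g ^ 2 - 1 = (g + 1) * (g - 1) by rw [← Nat.sq_sub_sq]]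
    exact Dvd.dvd.mul_left (dvd_mul_right _ _) _
  have := Nat.dvd_gcd h1 h2
  rw [hco] at this
  have := Nat.le_of_dvd one_pos this
  omega

/-! ### Counting palindromes divisible by `d` -/

/-- Palindromes of base `g` up to `X` coprime to `g ^ 3 - g`. -/
def PN (g X : ℕ) : Finset ℕ :=
  (Finset.Icc 1 X).filter
    (fun n => (Nat.digits g n).reverse = Nat.digits g n ∧ Nat.gcd n (g ^ 3 - g) = 1)

/-- The number of elements of `PN g X` divisible by `d`. -/
def Nd (g X d : ℕ) : ℕ := ((PN g X).filter (d ∣ ·)).card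

/-- The number of central windows completing the leading digits `T` to an element of `PN g X`
divisible by `d`. -/
def wc (g s d X T : ℕ) : ℕ :=
  (univ.filter fun a : Fin (s + 1) → Fin g =>
    Nat.gcd (cns g s T a) (g ^ 3 - g) = 1 ∧ d ∣ cns g s T a ∧ cns g s T a ≤ X).card

/-- The number of elements of `PN g X` divisible by `d` with at most `2s + 1` digits. -/
def shortc (g s d X : ℕ) : ℕ := ((PN g X).filter fun n => d ∣ n ∧ len g n ≤ 2 * s + 1).card

lemma lt_pow_len (g n : ℕ) (hg : 2 ≤ g) : n < g ^ len g n := Nat.lt_base_pow_length_digits (by omega)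

lemma sq_mul_le_cns (g s T : ℕ) (hg : 2 ≤ g) (a : Fin (s + 1) → Fin g) :
    T ^ 2 * g ^ (2 * s + 1) ≤ cns g s T a := by
  refine le_trans ?_ (le_cns g s T a)
  rw [show len g T + 2 * s + 1 = len g T + (2 * s + 1) by ring, pow_add g (len g T), sq, mul_assoc]
  exact Nat.mul_le_mul_left _ (Nat.mul_le_mul_right _ (lt_pow_len g T hg).le)

lemma Nd_eq (g s d X B : ℕ) (hg : 2 ≤ g) (hB : X < (B + 1) ^ 2 * g ^ (2 * s + 1)) :
    Nd g X d = shortc g s d X + ∑ T ∈ Icc 1 B, wc g s d X T := by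
  classical
  have hsplit : Nd g X d = shortc g s d X
      + ((PN g X).filter fun n => d ∣ n ∧ ¬ len g n ≤ 2 * s + 1).card := by
    unfold Nd shortc
    rw [← filter_filter, ← filter_filter, card_filter_add_card_filter_not]
  rw [hsplit]
  congr 1
  have hmem : ∀ n, n ∈ (PN g X).filter (fun n => d ∣ n ∧ ¬ len g n ≤ 2 * s + 1) →
      1 ≤ Tof g s n ∧ (∃ a, cns g s (Tof g s n) a = n) ∧ n ≤ X ∧ Nat.gcd n (g ^ 3 - g) = 1
        ∧ d ∣ n := by
    intro n hn
    simp only [PN, mem_filter, mem_Icc] at hn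
    obtain ⟨⟨⟨_, h2⟩, h3, h4⟩, h5, h6⟩ := hn
    obtain ⟨h7, h8⟩ := exists_cns g s n hg h3 (odd_len g n h3 h4 hg) (by omega)
    exact ⟨h7, h8, h2, h4, h5⟩
  have hle : ∀ T a, cns g s T a ≤ X → T ≤ B := by
    intro T a h
    have h1 := (sq_mul_le_cns g s T hg a).trans h
    have h2 := lt_of_mul_lt_mul_right (h1.trans_lt hB) (Nat.zero_le _)
    have := lt_of_pow_lt_pow_left₀ 2 (Nat.zero_le _) h2
    omega
  rw [card_eq_sum_card_fiberwise (f := Tof g s) (t := Icc 1 B)]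
  · refine sum_congr rfl fun T hT => ?_
    rw [mem_Icc] at hT
    symm
    unfold wc
    refine card_bij (fun a _ => cns g s T a) ?_ ?_ ?_
    · intro a ha
      rw [mem_filter] at ha
      obtain ⟨_, h1, h2, h3⟩ := ha
      simp only [PN, mem_filter, mem_Icc]
      refine ⟨⟨⟨⟨?_, h3⟩, cns_pal g s T hg hT.1 a, h1⟩, h2, ?_⟩, Tof_cns g s T hg hT.1 a⟩
      · refine le_trans ?_ (sq_mul_le_cns g s T hg a)
        exact Nat.mul_pos (pow_pos hT.1 2) (by positivity)
      · rw [len_cns g s T hg hT.1]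
        have : 0 < len g T := by
          unfold len
          rw [List.length_pos_iff, Nat.digits_ne_nil_iff_ne_zero]
          omega
        omega
    · intro a _ b _ h
      exact cns_injective g s T hg h
    · intro n hn
      rw [mem_filter] at hn
      obtain ⟨h1, ⟨a, ha⟩, h2, h3, h4⟩ := hmem n hn.1
      rw [hn.2] at ha
      refine ⟨a, ?_, ha⟩
      rw [mem_filter, ha]
      exact ⟨mem_univ _, h3, h4, h2⟩
  · intro n hn
    obtain ⟨h1, ⟨a, ha⟩, h2, -⟩ := hmem n hn
    rw [Finset.mem_coe, mem_Icc]
    exact ⟨h1, hle _ a (by rw [ha]; exact h2)⟩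

lemma wc_le (g s d X T : ℕ) : wc g s d X T ≤ g ^ (s + 1) := by
  unfold wc
  refine (card_le_univ _).trans ?_
  simp

lemma len_le_iff (g s n : ℕ) (hg : 2 ≤ g) : len g n ≤ s ↔ n < g ^ s :=
  Nat.digits_length_le_iff (by omega) n

lemma card_PN_pow_le (g s : ℕ) (hg : 2 ≤ g) : (PN g (g ^ (2 * s + 1) - 1)).card ≤ g ^ (s + 1) := by
  have h := Nd_eq g 0 1 (g ^ (2 * s + 1) - 1) (g ^ s - 1) hg (by
    have h1 : 0 < g ^ s := by positivity
    rw [Nat.sub_add_cancel h1, ← pow_mul, ← pow_add, show s * 2 + (2 * 0 + 1) = 2 * s + 1 by ring]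
    have h2 : 0 < g ^ (2 * s + 1) := by positivity
    omega)
  have h1 : Nd g (g ^ (2 * s + 1) - 1) 1 = (PN g (g ^ (2 * s + 1) - 1)).card := by
    unfold Nd; simp
  rw [← h1, h]
  have h2 : shortc g 0 1 (g ^ (2 * s + 1) - 1) ≤ g := by
    unfold shortc
    calc _ ≤ (range g).card := by
          refine card_le_card fun n hn => ?_
          rw [mem_filter] at hn
          rw [mem_range]
          have := (len_le_iff g 1 n hg).1 hn.2.2
          simpa using this
      _ = g := card_range g
  have h3 : ∑ T ∈ Icc 1 (g ^ s - 1), wc g 0 1 (g ^ (2 * s + 1) - 1) T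
      ≤ (g ^ s - 1) * g := by
    refine (sum_le_card_nsmul _ _ g fun T _ => ?_).trans (by simp)
    simpa using wc_le g 0 1 (g ^ (2 * s + 1) - 1) T
  have h4 : 1 ≤ g ^ s := Nat.one_le_pow _ _ (by omega)
  calc _ ≤ g + (g ^ s - 1) * g := add_le_add h2 h3
    _ = (g ^ s - 1 + 1) * g := by ring
    _ = g ^ (s + 1) := by rw [Nat.sub_add_cancel h4, pow_succ]

lemma shortc_le (g s d X : ℕ) (hg : 2 ≤ g) : shortc g s d X ≤ g ^ (s + 1) := by
  refine le_trans ?_ (card_PN_pow_le g s hg)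
  unfold shortc
  refine card_le_card fun n hn => ?_
  simp only [PN, mem_filter, mem_Icc] at hn ⊢
  have := (len_le_iff g (2 * s + 1) n hg).1 hn.2.2
  exact ⟨⟨hn.1.1.1, by omega⟩, hn.1.2⟩

/-- For `d ≥ g ^ (2s + 1)` every choice of leading digits has at most one admissible window. -/
lemma Nd_le_of_large (g s d X B : ℕ) (hg : 2 ≤ g) (hd : Nat.Coprime d g)
    (hdl : g ^ (2 * s + 1) ≤ d) (hB : X < (B + 1) ^ 2 * g ^ (2 * s + 1)) : Nd g X d ≤ B := by
  rw [Nd_eq g s d X B hg hB]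
  have h1 : shortc g s d X = 0 := by
    unfold shortc
    rw [card_eq_zero, filter_eq_empty_iff]
    rintro n hn ⟨h2, h3⟩
    have h4 := (len_le_iff g (2 * s + 1) n hg).1 h3
    simp only [PN, mem_filter, mem_Icc] at hn
    have := Nat.le_of_dvd hn.1.1 h2
    omega
  have h2 : ∀ T ∈ Icc 1 B, wc g s d X T ≤ 1 := by
    intro T _
    unfold wc
    rw [card_le_one]
    intro a ha b hb
    rw [mem_filter] at ha hb
    have h3 : d ∣ (cns g s T a - cns g s T b : ℤ).natAbs :=
      Int.natCast_dvd.1 (dvd_sub (Int.natCast_dvd_natCast.2 ha.2.2.1)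
        (Int.natCast_dvd_natCast.2 hb.2.2.1))
    have h4 : (cns g s T a - cns g s T b : ℤ) = (g ^ len g T : ℕ) * (win g s a - win g s b : ℤ) := by
      unfold cns; push_cast; ring
    rw [h4, Int.natAbs_mul, Int.natAbs_natCast] at h3
    have h5 := (Nat.Coprime.pow_right (len g T) hd).dvd_of_dvd_mul_left h3
    have h6 := win_lt g s hg a
    have h7 := win_lt g s hg b
    have h8 := Nat.eq_zero_of_dvd_of_lt h5 (by omega)
    exact win_injective g s hg (by omega)
  calc _ ≤ 0 + ∑ T ∈ Icc 1 B, 1 := add_le_add h1.le (sum_le_sum h2)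
    _ = B := by simp

lemma len_mono (g a b : ℕ) (h : a ≤ b) : len g a ≤ len g b := Nat.le_length_digits_le g a b h

/-- Equidistribution of `PN g X` in the class `0` modulo `d`, with error controlled by the
exponential sums `Fd`. Only one choice of leading digits is cut by the condition `n ≤ X`. -/
lemma Nd_equidist (g m d X B : ℕ) (hg : 2 ≤ g) (hd0 : 0 < d) (hd : Nat.Coprime d (g ^ 3 - g))
    (hB : X < (B + 1) ^ 2 * g ^ (2 * (2 * m) + 1)) :
    |(d : ℝ) * Nd g X d - Nd g X 1| ≤
      B * ((g ^ 3 - g : ℕ) * (g : ℝ) ^ (2 * m + 1) * ∑ b ∈ Ico 1 d, Fd g d m b)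
        + 2 * (d * (g : ℝ) ^ (2 * m + 1)) := by
  classical
  set E : ℝ := (g ^ 3 - g : ℕ) * (g : ℝ) ^ (2 * m + 1) * ∑ b ∈ Ico 1 d, Fd g d m b with hE
  set G : ℝ := d * (g : ℝ) ^ (2 * m + 1) with hG
  have hE0 : 0 ≤ E := (abs_nonneg _).trans (window_equidist g hg m 0 d 0 hd0 hd)
  have hd1 : (1 : ℝ) ≤ d := by exact_mod_cast hd0
  have key : ∀ u v : ℕ, u ≤ g ^ (2 * m + 1) → v ≤ g ^ (2 * m + 1) → |(d : ℝ) * u - v| ≤ G := by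
    intro u v hu hv
    have hu' : (u : ℝ) ≤ (g : ℝ) ^ (2 * m + 1) := by exact_mod_cast hu
    have hv' : (v : ℝ) ≤ (g : ℝ) ^ (2 * m + 1) := by exact_mod_cast hv
    have hu0 : (0 : ℝ) ≤ u := Nat.cast_nonneg _
    have hv0 : (0 : ℝ) ≤ v := Nat.cast_nonneg _
    rw [abs_le, hG]
    constructor <;> nlinarith [mul_nonneg (sub_nonneg.2 hd1) (hv0.trans hv'),
      mul_le_mul_of_nonneg_left hu' (zero_le_one.trans hd1)]
  set str : ℕ → Prop := fun T => T * g ^ (len g T + 2 * (2 * m) + 1) ≤ X ∧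
    X + 1 < (T + 1) * g ^ (len g T + 2 * (2 * m) + 1) with hstr
  have hT : ∀ T ∈ Icc 1 B, |(d : ℝ) * wc g (2 * m) d X T - wc g (2 * m) 1 X T|
      ≤ E + if str T then G else 0 := by
    intro T _
    by_cases h : str T
    · rw [if_pos h]
      have := key _ _ (wc_le g (2 * m) d X T) (wc_le g (2 * m) 1 X T)
      linarith
    · rw [if_neg h, add_zero]
      rcases lt_or_ge X (T * g ^ (len g T + 2 * (2 * m) + 1)) with h1 | h1
      · have h2 : ∀ d, wc g (2 * m) d X T = 0 := by
          intro d
          unfold wc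
          rw [card_eq_zero, filter_eq_empty_iff]
          rintro a - ⟨_, _, h3⟩
          have := le_cns g (2 * m) T a
          omega
        rw [h2, h2]
        simpa using hE0
      · have h2 : (T + 1) * g ^ (len g T + 2 * (2 * m) + 1) ≤ X + 1 := by
          by_contra h3
          exact h ⟨h1, not_le.1 h3⟩
        have h3 : ∀ a, cns g (2 * m) T a ≤ X := by
          intro a
          have := cns_lt g (2 * m) T hg a
          omega
        have := window_equidist g hg m (len g T) d (outer g (2 * m) T) hd0 hd
        unfold wc
        simp only [h3, and_true, one_dvd]
        exact this
  have huniq : ((Icc 1 B).filter str).card ≤ 1 := by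
    have haux : ∀ T T', str T → str T' → ¬ T < T' := by
      intro T T' h h' hlt
      have h1 : (T + 1) * g ^ (len g T + 2 * (2 * m) + 1)
          ≤ T' * g ^ (len g T' + 2 * (2 * m) + 1) :=
        Nat.mul_le_mul hlt (Nat.pow_le_pow_right (by omega)
          (by have := len_mono g T T' hlt.le; omega))
      have h2 := h.2
      have h3 := h'.1
      omega
    rw [card_le_one]
    intro T h T' h'
    rw [mem_filter] at h h'
    have := haux T T' h.2 h'.2
    have := haux T' T h'.2 h.2
    omega
  rw [Nd_eq g (2 * m) d X B hg hB, Nd_eq g (2 * m) 1 X B hg hB]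
  push_cast
  have hG0 : 0 ≤ G := by positivity
  calc _ = |((d : ℝ) * shortc g (2 * m) d X - shortc g (2 * m) 1 X)
        + ∑ T ∈ Icc 1 B, ((d : ℝ) * wc g (2 * m) d X T - wc g (2 * m) 1 X T)| := by
        rw [sum_sub_distrib, ← mul_sum]; congr 1; ring
    _ ≤ G + ∑ T ∈ Icc 1 B, (E + if str T then G else 0) := by
        refine (abs_add_le _ _).trans (add_le_add ?_ ?_)
        · exact key _ _ (shortc_le g (2 * m) d X hg) (shortc_le g (2 * m) 1 X hg)
        · exact (abs_sum_le_sum_abs _ _).trans (sum_le_sum hT)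
    _ ≤ G + (B * E + G) := by
        rw [sum_add_distrib, ← sum_filter, sum_const, sum_const, nsmul_eq_mul, nsmul_eq_mul,
          Nat.card_Icc, Nat.add_sub_cancel]
        have : (((Icc 1 B).filter str).card : ℝ) ≤ 1 := by exact_mod_cast huniq
        nlinarith
    _ = _ := by ring

/-! ### Upper and lower bounds for the number of palindromes -/

lemma PN_mono (g : ℕ) {X Y : ℕ} (h : X ≤ Y) : PN g X ⊆ PN g Y := by
  intro n hn
  simp only [PN, mem_filter, mem_Icc] at hn ⊢
  exact ⟨⟨hn.1.1, hn.1.2.trans h⟩, hn.2⟩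

lemma Nd_one (g X : ℕ) : Nd g X 1 = (PN g X).card := by unfold Nd; simp

lemma card_PN_le (g m X : ℕ) (hg : 2 ≤ g) (hX : X < g ^ (8 * m + 8)) :
    (PN g X).card ≤ g ^ (4 * m + 5) := by
  refine (card_le_card (PN_mono g ?_)).trans (card_PN_pow_le g (4 * m + 4) hg)
  have : g ^ (8 * m + 8) ≤ g ^ (2 * (4 * m + 4) + 1) := Nat.pow_le_pow_right (by omega) (by omega)
  omega

/-- Reversing the digits is multiplication by a power of `g` modulo `g ^ 2 - 1`. -/
lemma mul_ofDigits_reverse {R : Type*} [CommRing R] (g : ℕ) (h : (g : R) ^ 2 = 1) (L : List ℕ) :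
    (g : R) * (Nat.ofDigits g L.reverse : ℕ) = (g : R) ^ L.length * (Nat.ofDigits g L : ℕ) := by
  induction L with
  | nil => simp
  | cons a L ih =>
    rw [List.reverse_cons, Nat.ofDigits_append, Nat.ofDigits_singleton, Nat.ofDigits_cons,
      List.length_reverse, List.length_cons]
    push_cast at ih ⊢
    linear_combination ih - (g : R) ^ L.length * (Nat.ofDigits (g : R) L) * h

lemma coprime_g_sq (g : ℕ) (hg : 2 ≤ g) : Nat.Coprime g (g ^ 2 - 1) := by
  have h : 1 ≤ g ^ 2 := Nat.one_le_pow _ _ (by omega)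
  have h1 : Nat.Coprime (g ^ 2) (g ^ 2 - 1) := by
    have := (Nat.coprime_self_sub_right h).2 (Nat.coprime_one_right (g ^ 2))
    exact this
  exact Nat.Coprime.coprime_dvd_left (dvd_pow_self g two_ne_zero) h1

lemma dvd_revd (g T : ℕ) (hg : 2 ≤ g) (hT : g ^ 2 - 1 ∣ T) : g ^ 2 - 1 ∣ revd g T := by
  have h : 1 ≤ g ^ 2 := Nat.one_le_pow _ _ (by omega)
  have h1 : (g : ZMod (g ^ 2 - 1)) ^ 2 = 1 := by
    have h2 : (((g ^ 2 - 1 : ℕ)) : ZMod (g ^ 2 - 1)) = 0 := ZMod.natCast_self _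
    rw [Nat.cast_sub h] at h2
    push_cast at h2
    exact sub_eq_zero.1 h2
  have h2 := mul_ofDigits_reverse g h1 (Nat.digits g T)
  rw [Nat.ofDigits_digits, (ZMod.natCast_eq_zero_iff _ _).2 hT, mul_zero] at h2
  have h3 : g ^ 2 - 1 ∣ g * revd g T := by
    rw [← ZMod.natCast_eq_zero_iff]
    push_cast
    exact_mod_cast h2
  exact (coprime_g_sq g hg).symm.dvd_of_dvd_mul_left h3

lemma revd_leading_one (g r T : ℕ) (hg : 2 ≤ g) (h1 : g ^ r ≤ T) (h2 : T < 2 * g ^ r) :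
    ∃ w, revd g T = 1 + g * w := by
  obtain ⟨T', rfl⟩ := Nat.exists_eq_add_of_le h1
  have h3 : len g T' ≤ r := (len_le_iff g r T' hg).2 (by omega)
  obtain ⟨k, hk⟩ := Nat.exists_eq_add_of_le h3
  have h4 := Nat.digits_append_zeroes_append_digits (b := g) (k := k) (m := 1) (n := T')
    (by omega) one_pos
  have h5 : T' + g ^ ((Nat.digits g T').length + k) * 1 = g ^ r + T' := by
    rw [hk]; unfold len; ring
  rw [h5, Nat.digits_of_lt g 1 one_ne_zero (by omega)] at h4
  refine ⟨Nat.ofDigits g (Nat.digits g T' ++ List.replicate k 0).reverse, ?_⟩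
  unfold revd
  rw [← h4, List.reverse_append (bs := [1]), List.reverse_singleton,
    List.singleton_append, Nat.ofDigits_cons]

/-- Palindromes with leading digit and central digit `1`, whose leading half is a multiple of
`g ^ 2 - 1`, are coprime to `g ^ 3 - g`. -/
lemma cns_coprime (g r u : ℕ) (hg : 2 ≤ g) (h1 : g ^ r ≤ (g ^ 2 - 1) * u)
    (h2 : (g ^ 2 - 1) * u < 2 * g ^ r) :
    Nat.gcd (cns g 0 ((g ^ 2 - 1) * u) fun _ => ⟨1, by omega⟩) (g ^ 3 - g) = 1 := by
  set T := (g ^ 2 - 1) * u with hT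
  have hT1 : T ≠ 0 := by
    have : 0 < g ^ r := by positivity
    omega
  have hlen : len g T ≠ 0 := by
    have : 0 < len g T := by
      unfold len
      rw [List.length_pos_iff, Nat.digits_ne_nil_iff_ne_zero]
      exact hT1
    omega
  obtain ⟨w, hw⟩ := revd_leading_one g r T hg h1 h2
  obtain ⟨l, hl⟩ := Nat.exists_eq_succ_of_ne_zero hlen
  have hwin : win g 0 (fun _ => (⟨1, by omega⟩ : Fin g)) = 1 := by
    simp [win, vv]
  have hc : cns g 0 T (fun _ => ⟨1, by omega⟩) = revd g T + g ^ (len g T + 1) * T + g ^ len g T := by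
    unfold cns outer
    rw [hwin, mul_one]
  rw [hc, cube_sub_eq]
  refine Nat.Coprime.mul_right ?_ ?_
  · rw [hw, hl, show 1 + g * w + g ^ (l.succ + 1) * T + g ^ l.succ
      = 1 + (w + g ^ (l + 1) * T + g ^ l) * g by rw [Nat.succ_eq_add_one]; ring]
    simp
  · obtain ⟨v, hv⟩ := dvd_revd g T hg (hT ▸ dvd_mul_right _ _)
    rw [hv, show (g ^ 2 - 1) * v + g ^ (len g T + 1) * T + g ^ len g T
      = g ^ len g T + (v + g ^ (len g T + 1) * u) * (g ^ 2 - 1) by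
        rw [show g ^ (len g T + 1) * T = g ^ (len g T + 1) * ((g ^ 2 - 1) * u) by rw [← hT]]; ring,
      Nat.coprime_add_mul_right_left]
    exact Nat.Coprime.pow_left _ (coprime_g_sq g hg)

lemma le_card_PN_aux (g r X : ℕ) (hg : 2 ≤ g) (hX : g ^ (2 * r + 3) ≤ X) :
    2 * g ^ r / (g ^ 2 - 1) - (g ^ r / (g ^ 2 - 1) + 1) ≤ (PN g X).card := by
  classical
  have hq : 0 < g ^ 2 - 1 := by
    have : 2 ^ 2 ≤ g ^ 2 := Nat.pow_le_pow_left hg 2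
    omega
  rw [← Nat.card_Ico]
  have hrange : ∀ u ∈ Ico (g ^ r / (g ^ 2 - 1) + 1) (2 * g ^ r / (g ^ 2 - 1)),
      g ^ r ≤ (g ^ 2 - 1) * u ∧ (g ^ 2 - 1) * u < 2 * g ^ r := by
    intro u hu
    rw [mem_Ico] at hu
    constructor
    · have h1 : g ^ r / (g ^ 2 - 1) < u := by omega
      rw [Nat.div_lt_iff_lt_mul hq] at h1
      rw [mul_comm]
      exact h1.le
    · have h1 : u + 1 ≤ 2 * g ^ r / (g ^ 2 - 1) := by omega
      rw [Nat.le_div_iff_mul_le hq] at h1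
      nlinarith
  refine card_le_card_of_injOn (fun u => cns g 0 ((g ^ 2 - 1) * u) fun _ => ⟨1, by omega⟩) ?_ ?_
  · intro u hu
    obtain ⟨h1, h2⟩ := hrange u hu
    have hT1 : 1 ≤ (g ^ 2 - 1) * u := le_trans (Nat.one_le_pow _ _ (by omega)) h1
    simp only [PN, mem_coe, mem_filter, mem_Icc]
    refine ⟨⟨?_, ?_⟩, cns_pal g 0 _ hg hT1 _, cns_coprime g r u hg h1 h2⟩
    · refine le_trans ?_ (sq_mul_le_cns g 0 _ hg _)
      exact Nat.mul_pos (pow_pos hT1 2) (by positivity)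
    · refine le_trans (cns_lt g 0 _ hg _).le (le_trans ?_ hX)
      have hpow : 2 * g ^ r ≤ g ^ (r + 1) := by
        rw [pow_succ, mul_comm]
        exact Nat.mul_le_mul_left _ hg
      have h3 : len g ((g ^ 2 - 1) * u) ≤ r + 1 := by
        rw [len_le_iff g _ _ hg]
        exact h2.trans_le hpow
      calc ((g ^ 2 - 1) * u + 1) * g ^ (len g ((g ^ 2 - 1) * u) + 2 * 0 + 1)
          ≤ g ^ (r + 1) * g ^ (r + 2) := by
            refine Nat.mul_le_mul ?_ (Nat.pow_le_pow_right (by omega) (by omega))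
            exact Nat.succ_le_of_lt (h2.trans_le hpow)
        _ = g ^ (2 * r + 3) := by rw [← pow_add]; congr 1; ring
  · intro u hu v hv huv
    have hu1 : 1 ≤ (g ^ 2 - 1) * u := le_trans (Nat.one_le_pow _ _ (by omega)) (hrange u hu).1
    have hv1 : 1 ≤ (g ^ 2 - 1) * v := le_trans (Nat.one_le_pow _ _ (by omega)) (hrange v hv).1
    have h := congrArg (Tof g 0) huv
    simp only at h
    rw [Tof_cns g 0 _ hg hu1, Tof_cns g 0 _ hg hv1] at h
    exact Nat.eq_of_mul_eq_mul_left hq h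

lemma le_card_PN (g m X : ℕ) (hg : 2 ≤ g) (hm : 2 ≤ m) (hX : g ^ (8 * m) ≤ X) :
    g ^ (4 * m) ≤ g ^ 5 * (PN g X).card := by
  obtain ⟨j, rfl⟩ := Nat.exists_eq_add_of_le hm
  have hq : 0 < g ^ 2 - 1 := by
    have : 2 ^ 2 ≤ g ^ 2 := Nat.pow_le_pow_left hg 2
    omega
  have h := le_card_PN_aux g (4 * j + 6) X hg
    (le_trans (Nat.pow_le_pow_right (by omega) (by omega)) hX)
  set q := g ^ 2 - 1 with hqd
  set Y := g ^ (4 * j + 6) with hY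
  have h1 : Y / q + Y / q ≤ 2 * Y / q := by
    rw [Nat.le_div_iff_mul_le hq]
    have := Nat.div_mul_le_self Y q
    nlinarith
  have h2 : g ^ (4 * j + 4) ≤ Y / q := by
    rw [Nat.le_div_iff_mul_le hq, hY, show 4 * j + 6 = (4 * j + 4) + 2 by ring,
      pow_add g (4 * j + 4) 2]
    exact Nat.mul_le_mul_left _ (by omega)
  have h3 : 1 ≤ g ^ (4 * j + 3) := Nat.one_le_pow _ _ (by omega)
  have h4 : 2 * g ^ (4 * j + 3) ≤ g ^ (4 * j + 4) := by
    rw [pow_succ g (4 * j + 3)]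
    nlinarith
  have h5 : g ^ (4 * j + 3) ≤ (PN g X).card := by omega
  calc g ^ (4 * (2 + j)) = g ^ 5 * g ^ (4 * j + 3) := by rw [← pow_add]; congr 1; ring
    _ ≤ _ := Nat.mul_le_mul_left _ h5

/-! ### The Möbius function, coprime pairs and squarefree divisors -/

lemma sum_divisors_moebius (n : ℕ) :
    ∑ d ∈ n.divisors, (ArithmeticFunction.moebius d : ℝ) = if n = 1 then 1 else 0 := by
  have h := congrArg (fun f : ArithmeticFunction ℤ => f n) ArithmeticFunction.moebius_mul_coe_zeta
  simp only [ArithmeticFunction.coe_mul_zeta_apply, ArithmeticFunction.one_apply] at h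
  exact_mod_cast h

lemma card_coprime_pairs (g X : ℕ) :
    ((((PN g X) ×ˢ (PN g X)).filter (fun p => Nat.gcd p.1 p.2 = 1)).card : ℝ)
      = ∑ d ∈ Icc 1 X, (ArithmeticFunction.moebius d : ℝ) * (Nd g X d : ℝ) ^ 2 := by
  classical
  have h1 : ∀ p ∈ (PN g X) ×ˢ (PN g X), (if Nat.gcd p.1 p.2 = 1 then (1 : ℝ) else 0)
      = ∑ d ∈ Icc 1 X, (ArithmeticFunction.moebius d : ℝ)
        * ((if d ∣ p.1 then 1 else 0) * (if d ∣ p.2 then 1 else 0)) := by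
    intro p hp
    simp only [PN, mem_product, mem_filter, mem_Icc] at hp
    have h0 : Nat.gcd p.1 p.2 ≠ 0 := by
      rw [Ne, Nat.gcd_eq_zero_iff]; omega
    rw [← sum_divisors_moebius]
    have hsub : (Nat.gcd p.1 p.2).divisors = (Icc 1 X).filter fun d => d ∣ p.1 ∧ d ∣ p.2 := by
      ext d
      simp only [Nat.mem_divisors, mem_filter, mem_Icc, Nat.dvd_gcd_iff]
      constructor
      · rintro ⟨⟨h2, h3⟩, _⟩
        exact ⟨⟨Nat.pos_of_dvd_of_pos h2 hp.1.1.1, (Nat.le_of_dvd hp.1.1.1 h2).trans hp.1.1.2⟩,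
          h2, h3⟩
      · rintro ⟨_, h2⟩
        exact ⟨h2, h0⟩
    rw [hsub, sum_filter]
    refine sum_congr rfl fun d _ => ?_
    by_cases h2 : d ∣ p.1 <;> by_cases h3 : d ∣ p.2 <;> simp [h2, h3]
  rw [card_filter]
  push_cast
  rw [sum_congr rfl h1, sum_comm]
  refine sum_congr rfl fun d _ => ?_
  rw [← mul_sum, sum_product, sq]
  congr 1
  unfold Nd
  rw [card_filter]
  push_cast
  rw [sum_mul_sum]

/-- Elements of `PN g X` have no divisor sharing a factor with `g ^ 3 - g`. -/
lemma Nd_eq_zero (g X d : ℕ) (hd : ¬ Nat.Coprime d (g ^ 3 - g)) : Nd g X d = 0 := by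
  unfold Nd
  rw [card_eq_zero, filter_eq_empty_iff]
  intro n hn hdn
  simp only [PN, mem_filter] at hn
  exact hd (Nat.Coprime.coprime_dvd_left hdn hn.2.2)

/-- The coefficients of the singular series. -/
noncomputable def cf (g d : ℕ) : ℝ :=
  if Nat.Coprime d (g ^ 3 - g) then (ArithmeticFunction.moebius d : ℝ) / (d : ℝ) ^ 2 else 0

lemma abs_cf_le (g d : ℕ) : |cf g d| ≤ 1 / (d : ℝ) ^ 2 := by
  unfold cf
  split_ifs
  · rw [abs_div, abs_of_nonneg (by positivity : (0 : ℝ) ≤ (d : ℝ) ^ 2)]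
    gcongr
    exact_mod_cast ArithmeticFunction.abs_moebius_le_one
  · simp only [abs_zero]; positivity

lemma summable_cf (g : ℕ) : Summable (cf g) :=
  Summable.of_norm_bounded (Real.summable_one_div_nat_pow.2 one_lt_two) (fun d => abs_cf_le g d)

/-- The singular series `∑ μ(d) / d²` over `d` coprime to `g ^ 3 - g`. -/
lemma tsum_cf (g : ℕ) (hg : 2 ≤ g) :
    ∑' d, cf g d = 1 / (Real.pi ^ 2 / 6) *
            (∏ p ∈ (g ^ 3 - g).primeFactors, (1 - 1 / (p : ℝ) ^ 2)⁻¹) := by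
  have hM := cube_sub_pos g hg
  set M := g ^ 3 - g with hMd
  have : NeZero M := ⟨by omega⟩
  set χ : DirichletCharacter ℂ M := 1 with hχ
  have h2 : 1 < (2 : ℂ).re := by norm_num
  have h := DirichletCharacter.LSeries.mul_mu_eq_one χ h2
  have h3 : LSeries (fun n : ℕ => χ n) 2 = (∏ p ∈ M.primeFactors, (1 - (p : ℂ) ^ (-2 : ℂ)))
      * riemannZeta 2 := by
    rw [← DirichletCharacter.LFunctionTrivChar_eq_mul_riemannZeta (by norm_num),
      DirichletCharacter.LFunctionTrivChar, DirichletCharacter.LFunction_eq_LSeries _ h2]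
  have h4 : LSeries ((fun n : ℕ => χ n) * fun n => (ArithmeticFunction.moebius n : ℂ)) 2
      = ((∑' d, cf g d : ℝ) : ℂ) := by
    unfold LSeries
    rw [Complex.ofReal_tsum]
    refine tsum_congr fun n => ?_
    rw [LSeries.term_def]
    unfold cf
    rcases eq_or_ne n 0 with rfl | hn
    · simp
    · rw [if_neg hn]
      simp only [Pi.mul_apply]
      by_cases hc : Nat.Coprime n M
      · rw [if_pos hc, hχ, MulChar.one_apply ((ZMod.isUnit_iff_coprime n M).2 hc)]
        push_cast
        rw [one_mul]
        norm_cast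
      · rw [if_neg hc, MulChar.map_nonunit _ (fun h => hc ((ZMod.isUnit_iff_coprime n M).1 h))]
        simp
  change LSeries (fun n : ℕ => χ n) 2 * LSeries ((fun n : ℕ => χ n) * fun n =>
    (ArithmeticFunction.moebius n : ℂ)) 2 = 1 at h
  rw [h3, h4, riemannZeta_two] at h
  have h5 : (∏ p ∈ M.primeFactors, (1 - (p : ℂ) ^ (-2 : ℂ)))
      = ((∏ p ∈ M.primeFactors, (1 - 1 / (p : ℝ) ^ 2) : ℝ) : ℂ) := by
    push_cast
    refine prod_congr rfl fun p _ => ?_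
    rw [Complex.cpow_neg, one_div]
    norm_cast
  rw [h5] at h
  have h6 : (∏ p ∈ M.primeFactors, (1 - 1 / (p : ℝ) ^ 2)) * (Real.pi ^ 2 / 6) * ∑' d, cf g d = 1 := by
    exact_mod_cast h
  rw [prod_inv_distrib]
  have h7 := left_ne_zero_of_mul_eq_one h6
  have h8 := left_ne_zero_of_mul h7
  have h9 := right_ne_zero_of_mul h7
  rw [one_div, ← mul_inv, mul_comm (Real.pi ^ 2 / 6)]
  exact eq_inv_of_mul_eq_one_right h6

lemma two_pow_omega_le (E n : ℕ) (hn : n ≠ 0) :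
    (2 ^ n.primeFactors.card) ^ E ≤ (2 ^ 2 ^ E) ^ E * n := by
  classical
  rw [← card_filter_add_card_filter_not (s := n.primeFactors) (fun p => p < 2 ^ E), pow_add, mul_pow]
  refine Nat.mul_le_mul ?_ ?_
  · refine Nat.pow_le_pow_left (Nat.pow_le_pow_right (by norm_num) ?_) _
    calc _ ≤ (range (2 ^ E)).card := card_le_card fun p hp => by
            rw [mem_filter] at hp; exact mem_range.2 hp.2
      _ = _ := card_range _
  · rw [← pow_mul, mul_comm, pow_mul, ← prod_const]
    calc _ ≤ ∏ p ∈ n.primeFactors.filter (fun p => ¬ p < 2 ^ E), p :=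
          prod_le_prod' fun p hp => by rw [mem_filter] at hp; exact not_lt.1 hp.2
      _ ≤ ∏ p ∈ n.primeFactors, p :=
          prod_le_prod_of_subset_of_one_le' (filter_subset _ _)
            fun p hp _ => (Nat.prime_of_mem_primeFactors hp).one_le
      _ ≤ n := Nat.le_of_dvd (Nat.pos_of_ne_zero hn) (Nat.prod_primeFactors_dvd n)

lemma sum_abs_moebius_divisors (n : ℕ) (hn : n ≠ 0) :
    ∑ d ∈ n.divisors, |(ArithmeticFunction.moebius d : ℝ)| = 2 ^ n.primeFactors.card := by
  have h1 : ∀ d ∈ n.divisors, |(ArithmeticFunction.moebius d : ℝ)|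
      = if Squarefree d then 1 else 0 := by
    intro d _
    have := ArithmeticFunction.abs_moebius (n := d)
    rw [← Int.cast_abs, this]
    split_ifs <;> simp
  rw [sum_congr rfl h1, ← sum_filter, Nat.sum_divisors_filter_squarefree hn, sum_const,
    card_powerset]
  have : n.primeFactors.card = (UniqueFactorizationMonoid.normalizedFactors n).toFinset.card := by
    rw [Nat.factors_eq]; rfl
  rw [this]
  simp

/-- If `2 ^ ω(n) ≤ W` for all `n ≤ X`, then `∑ |μ(d)| N_d ≤ W N_1`. -/
lemma sum_moebius_Nd_le (g X : ℕ) (W : ℝ) (hW : ∀ n ∈ Icc 1 X, (2 : ℝ) ^ n.primeFactors.card ≤ W) :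
    ∑ d ∈ Icc 1 X, |(ArithmeticFunction.moebius d : ℝ)| * Nd g X d ≤ W * (PN g X).card := by
  classical
  have h1 : ∀ d ∈ Icc 1 X, |(ArithmeticFunction.moebius d : ℝ)| * Nd g X d
      = ∑ n ∈ PN g X, if d ∣ n then |(ArithmeticFunction.moebius d : ℝ)| else 0 := by
    intro d _
    unfold Nd
    rw [← sum_filter, sum_const, nsmul_eq_mul, mul_comm]
  rw [sum_congr rfl h1, sum_comm, mul_comm, ← nsmul_eq_mul]
  refine sum_le_card_nsmul _ _ _ fun n hn => ?_
  simp only [PN, mem_filter, mem_Icc] at hn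
  refine le_trans (le_of_eq ?_) (hW n (mem_Icc.2 hn.1))
  rw [← sum_abs_moebius_divisors n (by omega), ← sum_filter]
  refine sum_congr ?_ fun _ _ => rfl
  ext d
  simp only [mem_filter, mem_Icc, Nat.mem_divisors]
  constructor
  · rintro ⟨_, h⟩
    exact ⟨h, by omega⟩
  · rintro ⟨h, _⟩
    exact ⟨⟨Nat.pos_of_dvd_of_pos h hn.1.1, (Nat.le_of_dvd hn.1.1 h).trans hn.1.2⟩, h⟩

/-! ### Contributions of small, medium and large divisors -/

lemma Fd_sum_nonneg_aux (g : ℕ) (hg : 2 ≤ g) (m d : ℕ) (hd0 : 0 < d)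
    (hd : Nat.Coprime d (g ^ 3 - g)) : 0 ≤ ∑ b ∈ Ico 1 d, Fd g d m b := by
  have h := (abs_nonneg _).trans (window_equidist g hg m 0 d 0 hd0 hd)
  have hM : (0 : ℝ) < (g ^ 3 - g : ℕ) := by exact_mod_cast cube_sub_pos g hg
  have hp : (0 : ℝ) < (g ^ 3 - g : ℕ) * (g : ℝ) ^ (2 * m + 1) :=
    mul_pos hM (pow_pos (by exact_mod_cast (by omega : 0 < g)) _)
  exact nonneg_of_mul_nonneg_right h hp

lemma coprime_base {g d : ℕ} (hd : Nat.Coprime d (g ^ 3 - g)) : Nat.Coprime d g := by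
  refine Nat.Coprime.coprime_dvd_right ?_ hd
  rw [cube_sub_eq]
  exact dvd_mul_right _ _

/-- The constant `g ^ 5 (g ^ 3 - g)` in the equidistribution estimate. -/
noncomputable def A0 (g : ℕ) : ℝ := (g : ℝ) ^ 5 * (g ^ 3 - g : ℕ)

lemma A0_nonneg (g : ℕ) : 0 ≤ A0 g := by unfold A0; positivity

lemma Nd_dev (g m d X : ℕ) (hg : 2 ≤ g) (hX : X < g ^ (8 * m + 8)) (hd0 : 0 < d)
    (hd : Nat.Coprime d (g ^ 3 - g)) :
    |(Nd g X d : ℝ) - (PN g X).card / d| ≤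
      A0 g * (g : ℝ) ^ (4 * m) * ((∑ b ∈ Ico 1 d, Fd g d m b) / d) + 2 * (g : ℝ) ^ (2 * m + 1) := by
  have hd' : (0 : ℝ) < d := by exact_mod_cast hd0
  have h := Nd_equidist g m d X (g ^ (2 * m + 4)) hg hd0 hd (by
    refine hX.trans_le ?_
    calc g ^ (8 * m + 8) ≤ g ^ (8 * m + 9) := Nat.pow_le_pow_right (by omega) (by omega)
      _ = (g ^ (2 * m + 4)) ^ 2 * g ^ (2 * (2 * m) + 1) := by
          rw [← pow_mul, ← pow_add]; congr 1; ring
      _ ≤ _ := Nat.mul_le_mul_right _ (Nat.pow_le_pow_left (by omega) 2))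
  rw [Nd_one] at h
  have h2 : (Nd g X d : ℝ) - (PN g X).card / d = ((d : ℝ) * Nd g X d - (PN g X).card) / d := by
    field_simp
  rw [h2, abs_div, abs_of_pos hd', div_le_iff₀ hd']
  refine h.trans (le_of_eq ?_)
  unfold A0
  push_cast
  field_simp
  ring

lemma Nd_le_card (g X d : ℕ) : Nd g X d ≤ (PN g X).card := card_filter_le _ _

/-- The contribution of a divisor `d ≤ (g ^ 2) ^ k`. -/
lemma small_term (g m d X k : ℕ) (hg : 2 ≤ g) (hX : X < g ^ (8 * m + 8)) (hd0 : 0 < d)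
    (hdk : d ≤ (g ^ 2) ^ k) :
    |(ArithmeticFunction.moebius d : ℝ) * (Nd g X d : ℝ) ^ 2 - ((PN g X).card : ℝ) ^ 2 * cf g d| ≤
      2 * (PN g X).card * (A0 g * (g : ℝ) ^ (4 * m)
        * Real.exp (-(kap g / (4 * (g : ℝ) ^ 4) * (m / k : ℕ))) + 2 * (g : ℝ) ^ (2 * m + 1)) := by
  set P : ℝ := ((PN g X).card : ℝ) with hP
  set e1 := Real.exp (-(kap g / (4 * (g : ℝ) ^ 4) * (m / k : ℕ))) with he1
  have hP0 : 0 ≤ P := Nat.cast_nonneg _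
  have hA0 := A0_nonneg g
  have he0 : 0 < e1 := Real.exp_pos _
  by_cases hd : Nat.Coprime d (g ^ 3 - g)
  · have hd' : (1 : ℝ) ≤ d := by exact_mod_cast hd0
    have h1 := Nd_dev g m d X hg hX hd0 hd
    rw [← hP] at h1
    have hS : (∑ b ∈ Ico 1 d, Fd g d m b) / d ≤ e1 := by
      rw [div_le_iff₀ (by linarith)]
      calc ∑ b ∈ Ico 1 d, Fd g d m b ≤ ∑ b ∈ Ico 1 d, e1 := by
            refine sum_le_sum fun b hb => ?_
            rw [mem_Ico] at hb
            exact Fd_le_exp g hg d m b k hd0 (coprime_base hd) hdk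
              (fun h => absurd (Nat.le_of_dvd (by omega) h) (by omega))
        _ = (d - 1 : ℕ) * e1 := by simp
        _ ≤ e1 * d := by
            rw [mul_comm]
            gcongr
            exact Nat.sub_le _ _
    have h2 : |(Nd g X d : ℝ) - P / d| ≤ A0 g * (g : ℝ) ^ (4 * m) * e1 + 2 * (g : ℝ) ^ (2 * m + 1) := by
      refine h1.trans ?_
      gcongr
    have h3 : |(Nd g X d : ℝ) + P / d| ≤ 2 * P := by
      rw [abs_of_nonneg (by positivity)]
      have h4 : (Nd g X d : ℝ) ≤ P := by rw [hP]; exact_mod_cast Nd_le_card g X d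
      have h5 : P / d ≤ P := div_le_self hP0 hd'
      linarith
    have h6 : |(ArithmeticFunction.moebius d : ℝ)| ≤ 1 := by
      exact_mod_cast ArithmeticFunction.abs_moebius_le_one
    unfold cf
    rw [if_pos hd]
    calc _ = |(ArithmeticFunction.moebius d : ℝ)| * (|(Nd g X d : ℝ) + P / d|
          * |(Nd g X d : ℝ) - P / d|) := by
          rw [← abs_mul, ← abs_mul]; congr 1; field_simp; ring
      _ ≤ 1 * (2 * P * (A0 g * (g : ℝ) ^ (4 * m) * e1 + 2 * (g : ℝ) ^ (2 * m + 1))) := by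
          gcongr
      _ = _ := one_mul _
  · rw [Nd_eq_zero g X d hd]
    unfold cf
    rw [if_neg hd]
    simp only [Nat.cast_zero, ne_eq, OfNat.ofNat_ne_zero, not_false_eq_true, zero_pow, mul_zero,
      sub_zero, abs_zero]
    positivity

/-- For medium `d` the exponential sums are at most `3 d ^ (1 / 4)`. -/
lemma mid_bound (g t0 : ℕ) (hg : 2 ≤ g) (ht0 : 0 < t0)
    (ht : ∀ d k m : ℕ, 0 < d → Nat.Coprime d g → d ≤ (g ^ 8) ^ k → 4 * (k * t0) ≤ m →
      ∑ b ∈ Ico 1 d, Fd g d m b ≤ 3 ^ k)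
    (m d X : ℕ) (hX : X < g ^ (8 * m + 8)) (hd0 : 0 < d) (hd : Nat.Coprime d (g ^ 3 - g))
    (hdy : d ≤ (g ^ 8) ^ (m / (4 * t0))) :
    (Nd g X d : ℝ) ≤ ((g : ℝ) ^ 5 + 3 * A0 g + 2 * g) * (g : ℝ) ^ (4 * m)
      * (d : ℝ) ^ (-(3 / 4) : ℝ) := by
  have hg' : (1 : ℝ) ≤ g := by exact_mod_cast (by omega : 1 ≤ g)
  have hd1 : (1 : ℝ) ≤ d := by exact_mod_cast hd0
  have hdpos : (0 : ℝ) < d := by linarith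
  have hg8 : 81 ≤ g ^ 8 := le_trans (by norm_num) (Nat.pow_le_pow_left hg 8)
  have hA0 := A0_nonneg g
  set S := ∑ b ∈ Ico 1 d, Fd g d m b with hS
  have hS0 : 0 ≤ S := Fd_sum_nonneg_aux g hg m d hd0 hd
  have hS1 : S ≤ 3 * (d : ℝ) ^ (1 / 4 : ℝ) := by
    set k := Nat.clog (g ^ 8) d with hk
    have hk1 : d ≤ (g ^ 8) ^ k := Nat.le_pow_clog (by omega) d
    have hk2 : k ≤ m / (4 * t0) := Nat.clog_le_of_le_pow hdy
    have hk3 : 4 * (k * t0) ≤ m := by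
      calc 4 * (k * t0) = k * (4 * t0) := by ring
        _ ≤ m / (4 * t0) * (4 * t0) := Nat.mul_le_mul_right _ hk2
        _ ≤ m := Nat.div_mul_le_self _ _
    have h1 := ht d k m hd0 (coprime_base hd) hk1 hk3
    have h2 : (3 : ℝ) ^ k ≤ 3 * (d : ℝ) ^ (1 / 4 : ℝ) := by
      have h3 : 81 ^ k ≤ 81 * d := by
        rcases Nat.eq_zero_or_pos k with h0 | h0
        · rw [h0]; omega
        · have h5 : 1 < d := by
            by_contra h6
            have h7 : d = 1 := by omega
            rw [h7] at hk
            simp at hk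
            omega
          have h4 : (g ^ 8) ^ (k - 1) < d := Nat.pow_pred_clog_lt_self (by omega) h5
          calc 81 ^ k = 81 * 81 ^ (k - 1) := by
                rw [← pow_succ']; congr 1; omega
            _ ≤ 81 * (g ^ 8) ^ (k - 1) := Nat.mul_le_mul_left _ (Nat.pow_le_pow_left hg8 _)
            _ ≤ 81 * d := Nat.mul_le_mul_left _ h4.le
      have h3' : ((81 : ℝ)) ^ k ≤ 81 * d := by exact_mod_cast h3
      refine le_of_pow_le_pow_left₀ (n := 4) (by norm_num) (by positivity) ?_
      rw [mul_pow, ← Real.rpow_natCast ((d : ℝ) ^ (1 / 4 : ℝ)), ← Real.rpow_mul hdpos.le, ← pow_mul,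
        mul_comm k 4, pow_mul]
      norm_num
      exact h3'
    exact h1.trans h2
  have h1 := (abs_le.1 (Nd_dev g m d X hg hX hd0 hd)).2
  have hP : ((PN g X).card : ℝ) ≤ (g : ℝ) ^ 5 * (g : ℝ) ^ (4 * m) := by
    rw [← pow_add, add_comm]
    exact_mod_cast card_PN_le g m X hg hX
  set r : ℝ := (d : ℝ) ^ (-(3 / 4) : ℝ) with hr
  have hr0 : 0 < r := Real.rpow_pos_of_pos hdpos _
  have hinv : 1 / (d : ℝ) ≤ r := by
    rw [one_div, ← Real.rpow_neg_one, hr]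
    exact Real.rpow_le_rpow_of_exponent_le hd1 (by norm_num)
  have hSd : S / d ≤ 3 * r := by
    calc S / d ≤ 3 * (d : ℝ) ^ (1 / 4 : ℝ) / d := by gcongr
      _ = 3 * r := by
        rw [mul_div_assoc, hr]
        congr 1
        rw [div_eq_mul_inv, ← Real.rpow_neg_one, ← Real.rpow_add hdpos]
        norm_num
  have hH : (g : ℝ) ^ (2 * m) ≤ (g : ℝ) ^ (4 * m) * r := by
    have h2 : (d : ℝ) ≤ (g : ℝ) ^ (2 * m) := by
      have h3 : d ≤ g ^ (2 * m) := by
        refine hdy.trans ?_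
        rw [← pow_mul]
        refine Nat.pow_le_pow_right (by omega) ?_
        have h4 : m / (4 * t0) ≤ m / 4 := Nat.div_le_div_left (by omega) (by norm_num)
        omega
      exact_mod_cast h3
    have h3 : 1 ≤ (d : ℝ) * r := by
      rw [div_le_iff₀ hdpos] at hinv
      linarith
    calc (g : ℝ) ^ (2 * m) ≤ (g : ℝ) ^ (2 * m) * (d * r) := le_mul_of_one_le_right (by positivity) h3
      _ ≤ (g : ℝ) ^ (2 * m) * ((g : ℝ) ^ (2 * m) * r) := by gcongr
      _ = _ := by rw [← mul_assoc, ← pow_add]; congr 2; ring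
  have h5 : ((PN g X).card : ℝ) / d ≤ (g : ℝ) ^ 5 * (g : ℝ) ^ (4 * m) * r := by
    rw [div_eq_mul_one_div]
    gcongr
  have h6 : A0 g * (g : ℝ) ^ (4 * m) * (S / d) ≤ A0 g * (g : ℝ) ^ (4 * m) * (3 * r) := by gcongr
  have h7 : 2 * (g : ℝ) ^ (2 * m + 1) ≤ 2 * g * ((g : ℝ) ^ (4 * m) * r) := by
    rw [pow_succ]
    nlinarith
  rw [← hS] at h1
  linarith

/-- Uniform bound for large divisors. -/
lemma large_bound (g m d X v : ℕ) (hg : 2 ≤ g) (hX : X < g ^ (8 * m + 8)) (hv : 0 < v)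
    (hvm : v ≤ m) (hd : Nat.Coprime d (g ^ 3 - g)) (hdy : (g ^ 8) ^ v < d) :
    (Nd g X d : ℝ) * (g : ℝ) ^ (4 * v) ≤ (g : ℝ) ^ 5 * (g : ℝ) ^ (4 * m) := by
  have h := Nd_le_of_large g (4 * v - 1) d X (g ^ (4 * m + 5 - 4 * v)) hg (coprime_base hd)
    (le_trans (by rw [← pow_mul]; exact Nat.pow_le_pow_right (by omega) (by omega)) hdy.le) (by
      refine hX.trans_le ?_
      calc g ^ (8 * m + 8) ≤ g ^ (8 * m + 9) := Nat.pow_le_pow_right (by omega) (by omega)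
        _ = (g ^ (4 * m + 5 - 4 * v)) ^ 2 * g ^ (2 * (4 * v - 1) + 1) := by
            rw [← pow_mul, ← pow_add]; congr 1; omega
        _ ≤ _ := Nat.mul_le_mul_right _ (Nat.pow_le_pow_left (by omega) 2))
  have h2 : Nd g X d * g ^ (4 * v) ≤ g ^ 5 * g ^ (4 * m) := by
    refine (Nat.mul_le_mul_right _ h).trans (le_of_eq ?_)
    rw [← pow_add, ← pow_add]; congr 1; omega
  exact_mod_cast h2

lemma omega_bound (g t0 m n X : ℕ) (hg : 2 ≤ g) (ht0 : 0 < t0) (hX : X < g ^ (8 * m + 8))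
    (hn : n ∈ Icc 1 X) :
    (2 : ℝ) ^ n.primeFactors.card ≤ 2 ^ 2 ^ (16 * t0) * (g : ℝ) ^ (2 * (m / (4 * t0)) + 2) := by
  rw [mem_Icc] at hn
  have h := two_pow_omega_le (16 * t0) n (by omega)
  have h1 : n ≤ (g ^ (2 * (m / (4 * t0)) + 2)) ^ (16 * t0) := by
    refine (hn.2.trans hX.le).trans ?_
    rw [← pow_mul]
    refine Nat.pow_le_pow_right (by omega) ?_
    have h2 := Nat.lt_div_mul_add (a := m) (b := 4 * t0) (by omega)
    nlinarith
  have h2 : (2 ^ n.primeFactors.card) ^ (16 * t0)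
      ≤ (2 ^ 2 ^ (16 * t0) * g ^ (2 * (m / (4 * t0)) + 2)) ^ (16 * t0) := by
    rw [mul_pow]
    exact h.trans (Nat.mul_le_mul_left _ h1)
  have h3 := (Nat.pow_le_pow_iff_left (by omega)).1 h2
  exact_mod_cast h3

/-! ### Tails of convergent series -/

/-- The sum `∑ d ^ (-5/4)`. -/
noncomputable def Zs : ℝ := ∑' d : ℕ, (d : ℝ) ^ (-(5 / 4) : ℝ)

lemma summable_Zs : Summable fun d : ℕ => (d : ℝ) ^ (-(5 / 4) : ℝ) :=
  Real.summable_nat_rpow.2 (by norm_num)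

lemma Zs_nonneg : 0 ≤ Zs := tsum_nonneg fun _ => Real.rpow_nonneg (Nat.cast_nonneg _) _

lemma rpow_tail (D d : ℕ) (hD : 0 < D) (h : D ≤ d) :
    (d : ℝ) ^ (-(3 / 2) : ℝ) ≤ (D : ℝ) ^ (-(1 / 4) : ℝ) * (d : ℝ) ^ (-(5 / 4) : ℝ) := by
  have hD' : (0 : ℝ) < D := by exact_mod_cast hD
  have hDd : (D : ℝ) ≤ d := by exact_mod_cast h
  have hd' : (0 : ℝ) < d := hD'.trans_le hDd
  rw [show (-(3 / 2) : ℝ) = -(1 / 4) + -(5 / 4) by norm_num, Real.rpow_add hd']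
  refine mul_le_mul_of_nonneg_right ?_ (Real.rpow_nonneg hd'.le _)
  exact Real.rpow_le_rpow_of_nonpos hD' hDd (by norm_num)

lemma sum_tail (D X : ℕ) (hD : 0 < D) :
    ∑ d ∈ Ioc D X, (d : ℝ) ^ (-(3 / 2) : ℝ) ≤ (D : ℝ) ^ (-(1 / 4) : ℝ) * Zs := by
  calc _ ≤ ∑ d ∈ Ioc D X, (D : ℝ) ^ (-(1 / 4) : ℝ) * (d : ℝ) ^ (-(5 / 4) : ℝ) := by
        refine sum_le_sum fun d hd => ?_
        rw [mem_Ioc] at hd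
        exact rpow_tail D d hD hd.1.le
    _ = (D : ℝ) ^ (-(1 / 4) : ℝ) * ∑ d ∈ Ioc D X, (d : ℝ) ^ (-(5 / 4) : ℝ) := by rw [mul_sum]
    _ ≤ _ := by
        refine mul_le_mul_of_nonneg_left ?_ (Real.rpow_nonneg (Nat.cast_nonneg _) _)
        exact summable_Zs.sum_le_tsum _ fun d _ => Real.rpow_nonneg (Nat.cast_nonneg _) _

lemma cf_tail (g D : ℕ) (hD : 0 < D) :
    |∑' d, cf g d - ∑ d ∈ Icc 1 D, cf g d| ≤ (D : ℝ) ^ (-(1 / 4) : ℝ) * Zs := by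
  have h0 : cf g 0 = 0 := by unfold cf; simp
  have h1 : ∑ d ∈ Icc 1 D, cf g d = ∑ d ∈ range (D + 1), cf g d := by
    rw [range_eq_Ico, sum_eq_sum_Ico_succ_bot (by omega), h0, zero_add]; rfl
  rw [h1, ← (summable_cf g).sum_add_tsum_nat_add (D + 1), add_sub_cancel_left]
  have hs := (summable_nat_add_iff (D + 1)).2 summable_Zs
  have hb : ∀ i : ℕ, ‖cf g (i + (D + 1))‖
      ≤ (D : ℝ) ^ (-(1 / 4) : ℝ) * ((i + (D + 1) : ℕ) : ℝ) ^ (-(5 / 4) : ℝ) := by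
    intro i
    refine (abs_cf_le g _).trans (le_trans ?_ (rpow_tail D (i + (D + 1)) hD (by omega)))
    have h2 : (1 : ℝ) ≤ ((i + (D + 1) : ℕ) : ℝ) := by exact_mod_cast (by omega : 1 ≤ i + (D + 1))
    rw [one_div, ← Real.rpow_natCast, ← Real.rpow_neg (by linarith)]
    exact Real.rpow_le_rpow_of_exponent_le h2 (by norm_num)
  have h3 := tsum_of_norm_bounded ((hs.mul_left ((D : ℝ) ^ (-(1 / 4) : ℝ))).hasSum) hb
  refine h3.trans ?_
  rw [tsum_mul_left]
  refine mul_le_mul_of_nonneg_left ?_ (Real.rpow_nonneg (Nat.cast_nonneg _) _)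
  unfold Zs
  rw [← summable_Zs.sum_add_tsum_nat_add (D + 1)]
  exact le_add_of_nonneg_left (sum_nonneg fun d _ => Real.rpow_nonneg (Nat.cast_nonneg _) _)

/-! ### Assembling the error terms -/

lemma core_bound (g t0 : ℕ) (hg : 2 ≤ g) (ht0 : 0 < t0)
    (ht : ∀ d k m : ℕ, 0 < d → Nat.Coprime d g → d ≤ (g ^ 8) ^ k → 4 * (k * t0) ≤ m →
      ∑ b ∈ Ico 1 d, Fd g d m b ≤ 3 ^ k)
    (m k X : ℕ) (hX0 : g ^ (8 * m) ≤ X) (hX : X < g ^ (8 * m + 8)) (hv : 0 < m / (4 * t0))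
    (hk : k ≤ 4 * m) :
    |∑ d ∈ Icc 1 X, (ArithmeticFunction.moebius d : ℝ) * (Nd g X d : ℝ) ^ 2
        - ((PN g X).card : ℝ) ^ 2 * ∑' d, cf g d| ≤
      ((g : ℝ) ^ 2) ^ k * (2 * (PN g X).card * (A0 g * (g : ℝ) ^ (4 * m)
        * Real.exp (-(kap g / (4 * (g : ℝ) ^ 4) * (m / k : ℕ))) + 2 * (g : ℝ) ^ (2 * m + 1)))
      + (((g : ℝ) ^ 5 + 3 * A0 g + 2 * g) ^ 2 * ((g : ℝ) ^ (4 * m)) ^ 2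
          * ((((g : ℝ) ^ 2) ^ k) ^ (-(1 / 4) : ℝ) * Zs)
        + (g : ℝ) ^ 5 * (g : ℝ) ^ (4 * m) / (g : ℝ) ^ (4 * (m / (4 * t0)))
          * (2 ^ 2 ^ (16 * t0) * (g : ℝ) ^ (2 * (m / (4 * t0)) + 2) * (PN g X).card))
      + ((PN g X).card : ℝ) ^ 2 * ((((g : ℝ) ^ 2) ^ k) ^ (-(1 / 4) : ℝ) * Zs) := by
  set P : ℝ := ((PN g X).card : ℝ) with hP
  set v := m / (4 * t0) with hvd
  set D : ℕ := (g ^ 2) ^ k with hD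
  have hDr : ((g : ℝ) ^ 2) ^ k = (D : ℝ) := by rw [hD]; push_cast; rfl
  rw [hDr]
  set E1 := 2 * P * (A0 g * (g : ℝ) ^ (4 * m)
        * Real.exp (-(kap g / (4 * (g : ℝ) ^ 4) * (m / k : ℕ))) + 2 * (g : ℝ) ^ (2 * m + 1)) with hE1
  set A1 := (g : ℝ) ^ 5 + 3 * A0 g + 2 * g with hA1
  set L := (g : ℝ) ^ 5 * (g : ℝ) ^ (4 * m) / (g : ℝ) ^ (4 * v) with hL
  set W := (2 : ℝ) ^ 2 ^ (16 * t0) * (g : ℝ) ^ (2 * v + 2) with hW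
  have hg0 : (0 : ℝ) < g := by exact_mod_cast (by omega : 0 < g)
  have hA1n : 0 ≤ A1 := by have := A0_nonneg g; positivity
  have hD0 : 0 < D := by positivity
  have hDX : D ≤ X := by
    refine le_trans ?_ hX0
    rw [hD, ← pow_mul]
    exact Nat.pow_le_pow_right (by omega) (by omega)
  have hvm : v ≤ m := Nat.div_le_self _ _
  have hsplit : ∀ f : ℕ → ℝ, ∑ d ∈ Icc 1 X, f d = ∑ d ∈ Icc 1 D, f d + ∑ d ∈ Ioc D X, f d := by
    intro f
    have h1 : ∀ n, Icc 1 n = Ioc 0 n := fun n => by ext; simp [Nat.succ_le_iff]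
    rw [h1, h1, sum_Ioc_consecutive f (Nat.zero_le _) hDX]
  have hsmall : |∑ d ∈ Icc 1 D, ((ArithmeticFunction.moebius d : ℝ) * (Nd g X d : ℝ) ^ 2
      - P ^ 2 * cf g d)| ≤ D * E1 := by
    refine (abs_sum_le_sum_abs _ _).trans ?_
    refine (sum_le_card_nsmul _ _ E1 fun d hd => ?_).trans (by simp)
    rw [mem_Icc] at hd
    exact small_term g m d X k hg hX hd.1 hd.2
  have hbig : |∑ d ∈ Ioc D X, (ArithmeticFunction.moebius d : ℝ) * (Nd g X d : ℝ) ^ 2|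
      ≤ A1 ^ 2 * ((g : ℝ) ^ (4 * m)) ^ 2 * ((D : ℝ) ^ (-(1 / 4) : ℝ) * Zs) + L * (W * P) := by
    have hterm : ∀ d ∈ Ioc D X, |(ArithmeticFunction.moebius d : ℝ) * (Nd g X d : ℝ) ^ 2|
        ≤ A1 ^ 2 * ((g : ℝ) ^ (4 * m)) ^ 2 * (d : ℝ) ^ (-(3 / 2) : ℝ)
          + L * (|(ArithmeticFunction.moebius d : ℝ)| * Nd g X d) := by
      intro d hd
      rw [mem_Ioc] at hd
      have hd0 : (0 : ℝ) < d := by exact_mod_cast (by omega : 0 < d)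
      have hL0 : 0 ≤ L := by positivity
      have hr : 0 ≤ A1 ^ 2 * ((g : ℝ) ^ (4 * m)) ^ 2 * (d : ℝ) ^ (-(3 / 2) : ℝ) := by positivity
      have hl : 0 ≤ L * (|(ArithmeticFunction.moebius d : ℝ)| * Nd g X d) := by positivity
      have hmu : |(ArithmeticFunction.moebius d : ℝ)| ≤ 1 := by
        exact_mod_cast ArithmeticFunction.abs_moebius_le_one
      rw [abs_mul, abs_of_nonneg (sq_nonneg (Nd g X d : ℝ))]
      by_cases hc : Nat.Coprime d (g ^ 3 - g)
      · rcases le_or_gt d ((g ^ 8) ^ v) with hy | hy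
        · have h1 := mid_bound g t0 hg ht0 ht m d X hX (by omega) hc hy
          have h2 : (Nd g X d : ℝ) ^ 2
              ≤ (A1 * (g : ℝ) ^ (4 * m) * (d : ℝ) ^ (-(3 / 4) : ℝ)) ^ 2 :=
            pow_le_pow_left₀ (Nat.cast_nonneg _) h1 2
          have h3 : (A1 * (g : ℝ) ^ (4 * m) * (d : ℝ) ^ (-(3 / 4) : ℝ)) ^ 2
              = A1 ^ 2 * ((g : ℝ) ^ (4 * m)) ^ 2 * (d : ℝ) ^ (-(3 / 2) : ℝ) := by
            rw [mul_pow, mul_pow, ← Real.rpow_natCast ((d : ℝ) ^ (-(3 / 4) : ℝ)),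
              ← Real.rpow_mul hd0.le]
            norm_num
          have h4 : |(ArithmeticFunction.moebius d : ℝ)| * (Nd g X d : ℝ) ^ 2
              ≤ 1 * (Nd g X d : ℝ) ^ 2 := by gcongr
          linarith
        · have h1 := large_bound g m d X v hg hX hv hvm hc hy
          have h2 : (Nd g X d : ℝ) ≤ L := by
            rw [hL, le_div_iff₀ (by positivity)]
            exact h1
          have h3 : |(ArithmeticFunction.moebius d : ℝ)| * (Nd g X d : ℝ) ^ 2
              ≤ L * (|(ArithmeticFunction.moebius d : ℝ)| * Nd g X d) := by
            calc _ = (Nd g X d : ℝ) * (|(ArithmeticFunction.moebius d : ℝ)| * Nd g X d) := by ring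
              _ ≤ _ := by gcongr
          linarith
      · rw [Nd_eq_zero g X d hc]
        rw [Nd_eq_zero g X d hc] at hl
        simp only [Nat.cast_zero, ne_eq, OfNat.ofNat_ne_zero, not_false_eq_true, zero_pow,
          mul_zero] at hl ⊢
        linarith
    refine (abs_sum_le_sum_abs _ _).trans ((sum_le_sum hterm).trans ?_)
    rw [sum_add_distrib, ← mul_sum, ← mul_sum]
    refine add_le_add ?_ ?_
    · exact mul_le_mul_of_nonneg_left (sum_tail D X hD0) (by positivity)
    · refine mul_le_mul_of_nonneg_left ?_ (by positivity)
      refine le_trans ?_ (sum_moebius_Nd_le g X W fun n hn => omega_bound g t0 m n X hg ht0 hX hn)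
      refine sum_le_sum_of_subset_of_nonneg ?_ fun d _ _ => by positivity
      intro d hd
      rw [mem_Ioc] at hd
      rw [mem_Icc]
      omega
  have htail := cf_tail g D hD0
  have hfin : ∑ d ∈ Icc 1 X, (ArithmeticFunction.moebius d : ℝ) * (Nd g X d : ℝ) ^ 2
        - P ^ 2 * ∑' d, cf g d
      = ∑ d ∈ Icc 1 D, ((ArithmeticFunction.moebius d : ℝ) * (Nd g X d : ℝ) ^ 2 - P ^ 2 * cf g d)
        + ∑ d ∈ Ioc D X, (ArithmeticFunction.moebius d : ℝ) * (Nd g X d : ℝ) ^ 2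
        + - (P ^ 2 * (∑' d, cf g d - ∑ d ∈ Icc 1 D, cf g d)) := by
    rw [hsplit, sum_sub_distrib, ← mul_sum]
    ring
  rw [hfin]
  refine (abs_add_le _ _).trans (add_le_add ((abs_add_le _ _).trans (add_le_add hsmall hbig)) ?_)
  rw [abs_neg, abs_mul, abs_of_nonneg (sq_nonneg P)]
  exact mul_le_mul_of_nonneg_left htail (sq_nonneg P)

/-- The error terms in terms of `N_1 ^ 2` only, with four explicit decay factors. -/
lemma core_bound_card (g t0 : ℕ) (hg : 2 ≤ g) (ht0 : 0 < t0)
    (ht : ∀ d k m : ℕ, 0 < d → Nat.Coprime d g → d ≤ (g ^ 8) ^ k → 4 * (k * t0) ≤ m →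
      ∑ b ∈ Ico 1 d, Fd g d m b ≤ 3 ^ k) :
    ∃ C : ℝ, 0 < C ∧ ∀ m k X : ℕ, g ^ (8 * m) ≤ X → X < g ^ (8 * m + 8) → 2 ≤ m →
      0 < m / (4 * t0) → k ≤ 4 * m →
      |∑ d ∈ Icc 1 X, (ArithmeticFunction.moebius d : ℝ) * (Nd g X d : ℝ) ^ 2
        - ((PN g X).card : ℝ) ^ 2 * ∑' d, cf g d| ≤
      C * ((PN g X).card : ℝ) ^ 2 *
        (((g : ℝ) ^ 2) ^ k * Real.exp (-(kap g / (4 * (g : ℝ) ^ 4) * (m / k : ℕ)))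
          + ((g : ℝ) ^ 2) ^ k / (g : ℝ) ^ (2 * m)
          + (((g : ℝ) ^ 2) ^ k) ^ (-(1 / 4) : ℝ)
          + 1 / (g : ℝ) ^ (2 * (m / (4 * t0)))) := by
  set A1 := (g : ℝ) ^ 5 + 3 * A0 g + 2 * g with hA1
  have hg0 : (0 : ℝ) < g := by exact_mod_cast (by omega : 0 < g)
  have hA0 := A0_nonneg g
  have hZ := Zs_nonneg
  set C1 := 2 * A0 g * (g : ℝ) ^ 5 with hC1
  set C2 := 4 * (g : ℝ) * (g : ℝ) ^ 5 with hC2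
  set C3 := A1 ^ 2 * ((g : ℝ) ^ 5) ^ 2 * Zs + Zs with hC3
  set C4 := (g : ℝ) ^ 12 * 2 ^ 2 ^ (16 * t0) with hC4
  have hC10 : 0 ≤ C1 := by positivity
  have hC20 : 0 ≤ C2 := by positivity
  have hC30 : 0 ≤ C3 := by positivity
  have hC40 : 0 < C4 := by positivity
  refine ⟨C1 + C2 + C3 + C4, by positivity, fun m k X hX0 hX hm hv hk => ?_⟩
  refine (core_bound g t0 hg ht0 ht m k X hX0 hX hv hk).trans ?_
  set P : ℝ := ((PN g X).card : ℝ) with hP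
  set e1 := Real.exp (-(kap g / (4 * (g : ℝ) ^ 4) * (m / k : ℕ))) with he1
  set v := m / (4 * t0) with hvd
  set D : ℝ := ((g : ℝ) ^ 2) ^ k with hD
  set Q : ℝ := (g : ℝ) ^ (4 * m) with hQ
  set H : ℝ := (g : ℝ) ^ (2 * m) with hH
  have hHp : 0 < H := by positivity
  have hQH : Q = H * H := by rw [hQ, hH, ← pow_add]; congr 1; ring
  have hQP : Q ≤ (g : ℝ) ^ 5 * P := by
    rw [hQ, hP]; exact_mod_cast le_card_PN g m X hg hm hX0
  have hQ0 : 0 < Q := by positivity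
  have hP0 : 0 ≤ P := Nat.cast_nonneg _
  have hD0 : 0 < D := by positivity
  have he0 : 0 < e1 := Real.exp_pos _
  set D4 := D ^ (-(1 / 4) : ℝ) with hD4
  have hD40 : 0 < D4 := Real.rpow_pos_of_pos hD0 _
  set V := (g : ℝ) ^ (2 * v) with hV
  have hV0 : 0 < V := by positivity
  have t1 : D * (2 * P * (A0 g * Q * e1)) ≤ C1 * P ^ 2 * (D * e1) := by
    calc _ = 2 * A0 g * (D * e1) * P * Q := by ring
      _ ≤ 2 * A0 g * (D * e1) * P * ((g : ℝ) ^ 5 * P) := by gcongr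
      _ = _ := by rw [hC1]; ring
  have t2 : D * (2 * P * (2 * (g : ℝ) ^ (2 * m + 1))) ≤ C2 * P ^ 2 * (D / H) := by
    calc _ = 4 * g * (D / H) * P * Q := by rw [pow_succ, ← hH, hQH]; field_simp; ring
      _ ≤ 4 * g * (D / H) * P * ((g : ℝ) ^ 5 * P) := by gcongr
      _ = _ := by rw [hC2]; ring
  have t3 : A1 ^ 2 * Q ^ 2 * (D4 * Zs) + P ^ 2 * (D4 * Zs) ≤ C3 * P ^ 2 * D4 := by
    calc _ ≤ A1 ^ 2 * ((g : ℝ) ^ 5 * P) ^ 2 * (D4 * Zs) + P ^ 2 * (D4 * Zs) := by gcongr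
      _ = _ := by rw [hC3]; ring
  have t4 : (g : ℝ) ^ 5 * Q / (g : ℝ) ^ (4 * v) * (2 ^ 2 ^ (16 * t0) * (g : ℝ) ^ (2 * v + 2) * P)
      ≤ C4 * P ^ 2 * (1 / V) := by
    have h4v : (g : ℝ) ^ (4 * v) = V * V := by rw [hV, ← pow_add]; congr 1; ring
    calc _ = (g : ℝ) ^ 7 * 2 ^ 2 ^ (16 * t0) * (1 / V) * P * Q := by
          rw [h4v, pow_add, ← hV]; field_simp
      _ ≤ (g : ℝ) ^ 7 * 2 ^ 2 ^ (16 * t0) * (1 / V) * P * ((g : ℝ) ^ 5 * P) := by gcongr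
      _ = _ := by rw [hC4]; ring
  have s1 : 0 ≤ P ^ 2 * (D * e1) := by positivity
  have s2 : 0 ≤ P ^ 2 * (D / H) := by positivity
  have s3 : 0 ≤ P ^ 2 * D4 := by positivity
  have s4 : 0 ≤ P ^ 2 * (1 / V) := by positivity
  have expand : (C1 + C2 + C3 + C4) * P ^ 2 * (D * e1 + D / H + D4 + 1 / V)
      = (C1 * P ^ 2 * (D * e1) + C2 * P ^ 2 * (D / H) + C3 * P ^ 2 * D4 + C4 * P ^ 2 * (1 / V))
      + ((C2 + C3 + C4) * (P ^ 2 * (D * e1)) + (C1 + C3 + C4) * (P ^ 2 * (D / H))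
        + (C1 + C2 + C4) * (P ^ 2 * D4) + (C1 + C2 + C3) * (P ^ 2 * (1 / V))) := by ring
  rw [expand]
  have hpos : 0 ≤ (C2 + C3 + C4) * (P ^ 2 * (D * e1)) + (C1 + C3 + C4) * (P ^ 2 * (D / H))
        + (C1 + C2 + C4) * (P ^ 2 * D4) + (C1 + C2 + C3) * (P ^ 2 * (1 / V)) := by positivity
  linarith

/-- With `k` proportional to `√m`, all decay factors of `core_bound_card` are `≪ exp (-c √m)`. -/
lemma decay_bound (g t0 : ℕ) (hg : 2 ≤ g) (ht0 : 0 < t0) :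
    ∃ (c C : ℝ) (m0 K0 : ℕ), 0 < c ∧ 0 < C ∧ ∀ m : ℕ, m0 ≤ m →
      2 ≤ m ∧ 0 < m / (4 * t0) ∧ Nat.sqrt m / K0 ≤ 4 * m ∧
      ((g : ℝ) ^ 2) ^ (Nat.sqrt m / K0)
            * Real.exp (-(kap g / (4 * (g : ℝ) ^ 4) * (m / (Nat.sqrt m / K0) : ℕ)))
          + ((g : ℝ) ^ 2) ^ (Nat.sqrt m / K0) / (g : ℝ) ^ (2 * m)
          + (((g : ℝ) ^ 2) ^ (Nat.sqrt m / K0)) ^ (-(1 / 4) : ℝ)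
          + 1 / (g : ℝ) ^ (2 * (m / (4 * t0))) ≤ C * Real.exp (-(c * Nat.sqrt m)) := by
  have hg0 : (0 : ℝ) < g := by exact_mod_cast (by omega : 0 < g)
  set l := Real.log g with hl
  have hl0 : 0 < l := Real.log_pos (by exact_mod_cast (by omega : 1 < g))
  have hpow : ∀ n : ℕ, (g : ℝ) ^ n = Real.exp (n * l) := by
    intro n
    rw [mul_comm, Real.exp_mul, hl, Real.exp_log hg0, Real.rpow_natCast]
  set c3 := kap g / (4 * (g : ℝ) ^ 4) with hc3
  have hc30 : 0 < c3 := div_pos (kap_pos g hg) (by positivity)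
  obtain ⟨K0, hK⟩ := exists_nat_ge ((2 * l + 1) / c3)
  rw [div_le_iff₀ hc30] at hK
  have hK0 : 0 < K0 := by
    rcases Nat.eq_zero_or_pos K0 with h | h
    · rw [h] at hK
      simp only [Nat.cast_zero, zero_mul] at hK
      linarith
    · exact h
  have hK1 : (1 : ℝ) ≤ K0 := by exact_mod_cast hK0
  have ht1 : (1 : ℝ) ≤ t0 := by exact_mod_cast ht0
  set c := min (min 1 l) (min (l / (2 * K0)) (l / (2 * t0))) with hc
  have hc_pos : 0 < c := by
    refine lt_min (lt_min one_pos hl0) (lt_min ?_ ?_) <;> positivity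
  have hc_1 : c ≤ 1 := (min_le_left _ _).trans (min_le_left _ _)
  have hc_2 : c ≤ l := (min_le_left _ _).trans (min_le_right _ _)
  have hc_3 : c ≤ l / (2 * K0) := (min_le_right _ _).trans (min_le_left _ _)
  have hc_4 : c ≤ l / (2 * t0) := (min_le_right _ _).trans (min_le_right _ _)
  refine ⟨c, 4 * Real.exp (2 * l), 4 + K0 ^ 2 + 4 * t0, K0, hc_pos, by positivity, ?_⟩
  intro m hm
  set w := Nat.sqrt m with hw
  set k := w / K0 with hk
  set v := m / (4 * t0) with hv
  have hwm : w * w ≤ m := Nat.sqrt_le m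
  have hwK : K0 ≤ w := Nat.le_sqrt'.2 (by omega)
  have hw2 : 2 ≤ w := Nat.le_sqrt'.2 (by omega)
  have hkw : k ≤ w := Nat.div_le_self _ _
  have hk1 : 1 ≤ k := (Nat.one_le_div_iff hK0).2 hwK
  have hkK : k * K0 ≤ w := Nat.div_mul_le_self _ _
  have hkK2 : w < K0 * (k + 1) := by
    rw [mul_comm]; exact Nat.lt_mul_of_div_lt (Nat.lt_succ_self _) hK0
  have hvt : m < 4 * t0 * (v + 1) := by
    rw [mul_comm]; exact Nat.lt_mul_of_div_lt (Nat.lt_succ_self _) (by omega)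
  have hmk : w * K0 ≤ m / k := by
    rw [Nat.le_div_iff_mul_le hk1]
    calc w * K0 * k = w * (k * K0) := by ring
      _ ≤ w * w := Nat.mul_le_mul_left _ hkK
      _ ≤ m := hwm
  have hm2w : 2 * w ≤ m := (Nat.mul_le_mul_right w hw2).trans hwm
  refine ⟨by omega, (Nat.one_le_div_iff (by omega)).2 (by omega), by omega, ?_⟩
  have hwr : (0 : ℝ) ≤ w := Nat.cast_nonneg _
  have hkwr : (k : ℝ) ≤ w := by exact_mod_cast hkw
  have hmkr : (w : ℝ) * K0 ≤ (m / k : ℕ) := by exact_mod_cast hmk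
  have hmwr : 2 * (w : ℝ) ≤ m := by exact_mod_cast hm2w
  have hkKr : (w : ℝ) ≤ K0 * (k + 1) := by exact_mod_cast hkK2.le
  have hvtr : (m : ℝ) ≤ 4 * t0 * (v + 1) := by exact_mod_cast hvt.le
  have hD : ((g : ℝ) ^ 2) ^ k = Real.exp (2 * k * l) := by
    rw [← pow_mul, hpow]; push_cast; rfl
  have hcw1 : c * w ≤ 1 * w := by gcongr
  have hcw2 : c * w ≤ l * w := by gcongr
  have T1 : ((g : ℝ) ^ 2) ^ k * Real.exp (-(c3 * (m / k : ℕ)))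
      ≤ Real.exp (2 * l) * Real.exp (-(c * w)) := by
    rw [hD, ← Real.exp_add, ← Real.exp_add, Real.exp_le_exp]
    have h1 : c3 * (w * K0) ≤ c3 * (m / k : ℕ) := by gcongr
    have h2 : (2 * l + 1) * w ≤ K0 * c3 * w := by gcongr
    have h3 : 2 * k * l ≤ 2 * w * l := by gcongr
    linarith
  have T2 : ((g : ℝ) ^ 2) ^ k / (g : ℝ) ^ (2 * m) ≤ Real.exp (2 * l) * Real.exp (-(c * w)) := by
    rw [hD, hpow (2 * m), ← Real.exp_sub, ← Real.exp_add, Real.exp_le_exp]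
    push_cast
    have h3 : 2 * k * l ≤ 2 * w * l := by gcongr
    have h4 : 2 * (2 * (w : ℝ)) * l ≤ 2 * m * l := by gcongr
    nlinarith
  have T3 : (((g : ℝ) ^ 2) ^ k) ^ (-(1 / 4) : ℝ) ≤ Real.exp (2 * l) * Real.exp (-(c * w)) := by
    rw [hD, ← Real.exp_mul, ← Real.exp_add, Real.exp_le_exp]
    have h1 : c * w ≤ l / (2 * K0) * (K0 * (k + 1)) := by gcongr
    have h2 : l / (2 * K0) * (K0 * (k + 1)) = l / 2 * (k + 1) := by field_simp
    linarith
  have T4 : 1 / (g : ℝ) ^ (2 * v) ≤ Real.exp (2 * l) * Real.exp (-(c * w)) := by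
    rw [hpow (2 * v), one_div, ← Real.exp_neg, ← Real.exp_add, Real.exp_le_exp]
    push_cast
    have h1 : c * w ≤ l / (2 * t0) * (4 * t0 * (v + 1)) := by
      have : (w : ℝ) ≤ 4 * t0 * (v + 1) := by linarith
      gcongr
    have h2 : l / (2 * t0) * (4 * t0 * (v + 1)) = 2 * l * (v + 1) := by field_simp; ring
    linarith
  linarith

theorem relatively_prime_palindromes_coprime_base (g : ℕ) (hg : 2 ≤ g) :
    ∃ c C : ℝ, 0 < c ∧ 0 < C ∧ ∀ x : ℝ, 2 ≤ x →
      |((((Pstar g x) ×ˢ (Pstar g x)).filter (fun p => Nat.gcd p.1 p.2 = 1)).card : ℝ) -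
          1 / (Real.pi ^ 2 / 6) *
            (∏ p ∈ (g ^ 3 - g).primeFactors, (1 - 1 / (p : ℝ) ^ 2)⁻¹) *
            ((Pstar g x).card : ℝ) ^ 2| ≤
        C * ((Pstar g x).card : ℝ) ^ 2 * Real.exp (-(c * Real.sqrt (Real.log x))) := by
  obtain ⟨t0, ht0, ht⟩ := exists_sum_Fd_le g hg
  obtain ⟨C1, hC1, hcore⟩ := core_bound_card g t0 hg ht0 ht
  obtain ⟨c5, C5, m0, K0, hc5, hC5, hdecay⟩ := decay_bound g t0 hg ht0
  have hg0 : (0 : ℝ) < g := by exact_mod_cast (by omega : 0 < g)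
  set l := Real.log g with hl
  have hl0 : 0 < l := Real.log_pos (by exact_mod_cast (by omega : 1 < g))
  set K := ∑' d, cf g d with hK
  set R := Real.sqrt (8 * l) with hR
  have hR0 : 0 < R := Real.sqrt_pos.2 (by positivity)
  refine ⟨c5 / R, C1 * C5 * Real.exp c5 + (1 + |K|) * Real.exp (c5 * (m0 + 1)), by positivity,
    by positivity, fun x hx => ?_⟩
  rw [← tsum_cf g hg, ← hK]
  have hPs : Pstar g x = PN g ⌊x⌋₊ := rfl
  rw [hPs]
  set X := ⌊x⌋₊ with hX
  have hX2 : 2 ≤ X := Nat.le_floor (by exact_mod_cast hx)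
  set m := Nat.log g X / 8 with hm
  have hXlo : g ^ (8 * m) ≤ X :=
    (Nat.pow_le_pow_right (by omega) (by omega)).trans (Nat.pow_log_le_self g (by omega))
  have hXhi : X < g ^ (8 * m + 8) :=
    (Nat.lt_pow_succ_log_self (by omega) X).trans_le (Nat.pow_le_pow_right (by omega) (by omega))
  set w := Nat.sqrt m with hw
  have hsqrt : Real.sqrt (Real.log x) ≤ R * (w + 1) := by
    have h1 : x ≤ (g : ℝ) ^ (8 * m + 8) := by
      have h2 : x < X + 1 := Nat.lt_floor_add_one x
      have h3 : ((X + 1 : ℕ) : ℝ) ≤ ((g ^ (8 * m + 8) : ℕ) : ℝ) := by exact_mod_cast hXhi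
      push_cast at h3
      linarith
    have h2 : Real.log x ≤ 8 * l * (w + 1) ^ 2 := by
      have h3 := Real.log_le_log (by linarith) h1
      rw [Real.log_pow, ← hl] at h3
      have h4 : m + 1 ≤ (w + 1) ^ 2 := by
        have := Nat.lt_succ_sqrt m
        rw [sq]
        exact this
      have h5 : (m : ℝ) + 1 ≤ (w + 1) ^ 2 := by exact_mod_cast h4
      push_cast at h3
      nlinarith
    rw [Real.sqrt_le_left (by positivity), mul_pow, hR, Real.sq_sqrt (by positivity)]
    exact h2
  have hexp : Real.exp (-(c5 * (w + 1))) ≤ Real.exp (-(c5 / R * Real.sqrt (Real.log x))) := by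
    rw [Real.exp_le_exp, neg_le_neg_iff]
    calc c5 / R * Real.sqrt (Real.log x) ≤ c5 / R * (R * (w + 1)) := by gcongr
      _ = c5 * (w + 1) := by field_simp
  set e := Real.exp (-(c5 / R * Real.sqrt (Real.log x))) with he
  have he0 : 0 < e := Real.exp_pos _
  set P : ℝ := ((PN g X).card : ℝ) with hP
  have hP0 : 0 ≤ P := Nat.cast_nonneg _
  rcases le_or_gt m0 m with hmm | hmm
  · obtain ⟨h1, h2, h3, h4⟩ := hdecay m hmm
    have h5 := hcore m (w / K0) X hXlo hXhi h1 h2 h3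
    rw [card_coprime_pairs, mul_comm K]
    refine h5.trans ?_
    have h6 : Real.exp (-(c5 * w)) ≤ Real.exp c5 * e := by
      refine le_trans (le_of_eq ?_) (mul_le_mul_of_nonneg_left hexp (Real.exp_pos c5).le)
      rw [← Real.exp_add]; congr 1; ring
    calc _ ≤ C1 * P ^ 2 * (C5 * (Real.exp c5 * e)) := by
          refine mul_le_mul_of_nonneg_left (h4.trans ?_) (by positivity)
          exact mul_le_mul_of_nonneg_left h6 hC5.le
      _ = C1 * C5 * Real.exp c5 * P ^ 2 * e := by ring
      _ ≤ _ := by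
          gcongr
          exact le_add_of_nonneg_right (by positivity)
  -- For bounded `x` the trivial bound suffices.
  · have h1 : ((((PN g X) ×ˢ (PN g X)).filter (fun p => Nat.gcd p.1 p.2 = 1)).card : ℝ) ≤ P ^ 2 := by
      have := card_filter_le ((PN g X) ×ˢ (PN g X)) (fun p => Nat.gcd p.1 p.2 = 1)
      rw [card_product, ← sq] at this
      rw [hP]
      exact_mod_cast this
    have h2 : Real.exp (-(c5 * (m0 + 1))) ≤ e := by
      refine le_trans ?_ hexp
      rw [Real.exp_le_exp, neg_le_neg_iff]
      have h3 : (w : ℝ) ≤ m0 := by exact_mod_cast (Nat.sqrt_le_self m).trans hmm.le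
      gcongr
    have h3 : 1 ≤ Real.exp (c5 * (m0 + 1)) * e := by
      calc (1 : ℝ) = Real.exp (c5 * (m0 + 1)) * Real.exp (-(c5 * (m0 + 1))) := by
            rw [← Real.exp_add]; simp
        _ ≤ _ := by gcongr
    calc _ ≤ (1 + |K|) * P ^ 2 := by
          refine (abs_sub _ _).trans ?_
          rw [abs_mul, abs_of_nonneg (sq_nonneg P), abs_of_nonneg (Nat.cast_nonneg _)]
          linarith
      _ ≤ (1 + |K|) * P ^ 2 * (Real.exp (c5 * (m0 + 1)) * e) :=
          le_mul_of_one_le_right (by positivity) h3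
      _ = (1 + |K|) * Real.exp (c5 * (m0 + 1)) * P ^ 2 * e := by ring
      _ ≤ _ := by
          gcongr
          exact le_add_of_nonneg_left (by positivity)
end

section
/- Let g ≥ 2 be an integer. There exists a constant C > 0 depending only on g such that for all positive integers N, q and every integer a: if a ≢ 0 (mod q) then #Π(N; a, q) ≤ C(g^{N/2} q^{−1/2} + 1), and if a ≡ 0 (mod q) then #Π(N; a, q) ≤ C g^{N/2} q^{−1/2}. -/
/-!
Fix `M ≤ N` and put `d = gcd(q, g^M)`. The last `M` digits of a palindrome `n ≡ a (mod q)` form a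
number below `g^M` whose class modulo `d` is that of `a`, so they take at most `g^M / d` values.
By symmetry they determine the first `M` digits, i.e. `n / g^(N-M)`. Palindromes with the same last
`M` digits therefore differ only in `n % g^(N-M)`, and these remainders are congruent modulo
`lcm(q, g^M) = q g^M / d`. Hence (`card_palinsMod_le`, `card_palinsMod_le_real`)

  `#Π(N; a, q) ≤ (g^M / d) (g^(N-M) / lcm(q, g^M) + 1) = g^(N-M) / q + g^M / d`.

Write `x = g^(N/2) q^(-1/2)`. If `q > g^N`, there is at most one such palindrome, and none when
`q ∣ a`. Otherwise let `M ≤ N` be the largest exponent with `g^(2M) q ≤ g^N gcd(q, g^M)`. This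
inequality gives `g^M / d ≤ x`, and its failure at `M + 1` gives `x ≤ g^(M+1)`, so that
`g^(N-M) / q = x² / g^M ≤ g x`; if `M = N`, then `g^(N-M) / q ≤ 1 ≤ x` instead. The total is at most `2 g x`.
-/

open Finset

/-- The set of palindromes of base `g` of length `N`. -/
def Palins (g N : ℕ) : Finset ℕ :=
  (Finset.Ico 1 (g ^ N)).filter
    (fun n => (Nat.digits g n).length = N ∧ (Nat.digits g n).reverse = Nat.digits g n)

/-- `Π(N; a, q)`: palindromes of length `N` congruent to `a` modulo `q`. -/
def PalinsMod (g N : ℕ) (a : ℤ) (q : ℕ) : Finset ℕ :=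
  (Palins g N).filter (fun n => (n : ℤ) % (q : ℤ) = a % (q : ℤ))

/-- Naturals below `r * k` lying in a single class modulo `r` number at most `k`. -/
lemma card_le_of_modEq (S : Finset ℕ) (r k : ℕ) (hlt : ∀ m ∈ S, m < r * k)
    (hmod : ∀ m ∈ S, ∀ m' ∈ S, m ≡ m' [MOD r]) : S.card ≤ k := by
  rw [← Finset.card_range k]
  apply Finset.card_le_card_of_injOn (fun m => m / r)
  · intro m hm
    simpa using Nat.div_lt_of_lt_mul (hlt m hm)
  · intro m hm m' hm' h
    have h1 : m % r = m' % r := hmod m hm m' hm'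
    have h2 : m / r = m' / r := h
    rw [← Nat.div_add_mod m r, ← Nat.div_add_mod m' r, h1, h2]

/-- The last `M` digits of a palindrome of length `N` determine its first `M` digits. -/
lemma palin_top_eq {g N M n n' : ℕ} (hg : 2 ≤ g) (hM : M ≤ N) (hn : n ∈ Palins g N)
    (hn' : n' ∈ Palins g N) (h : n % g ^ M = n' % g ^ M) :
    n / g ^ (N - M) = n' / g ^ (N - M) := by
  simp only [Palins, Finset.mem_filter] at hn hn'
  obtain ⟨-, hl, hr⟩ := hn
  obtain ⟨-, hl', hr'⟩ := hn'
  have key : ∀ m : ℕ, m % g ^ M = Nat.ofDigits g ((Nat.digits g m).take M) := fun m =>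
    Nat.self_mod_pow_eq_ofDigits_take M m hg
  have ht : (Nat.digits g n).take M = (Nat.digits g n').take M := by
    apply Nat.ofDigits_inj_of_len_eq (b := g) (by omega)
    · simp [hl, hl']
    · intro l hlm
      exact Nat.digits_lt_base (by omega) (List.mem_of_mem_take hlm)
    · intro l hlm
      exact Nat.digits_lt_base (by omega) (List.mem_of_mem_take hlm)
    · rw [← key, ← key, h]
  have top : ∀ m : ℕ, (Nat.digits g m).length = N →
      (Nat.digits g m).reverse = Nat.digits g m →
      m / g ^ (N - M) = Nat.ofDigits g ((Nat.digits g m).take M).reverse := by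
    intro m hlm hrm
    rw [Nat.self_div_pow_eq_ofDigits_drop (N - M) m hg]
    congr 1
    conv_lhs => rw [← hrm, List.drop_reverse, hlm, Nat.sub_sub_self hM]
  rw [top n hl hr, top n' hl' hr', ht]

lemma palinsMod_modEq {g N q n n' : ℕ} {a : ℤ} (hn : n ∈ PalinsMod g N a q)
    (hn' : n' ∈ PalinsMod g N a q) : n ≡ n' [MOD q] := by
  simp only [PalinsMod, Finset.mem_filter] at hn hn'
  exact (Int.natCast_modEq_iff).1 (hn.2.trans hn'.2.symm)

lemma card_palinsMod_le (g : ℕ) (hg : 2 ≤ g) (N q : ℕ) (hq : 1 ≤ q) (a : ℤ) (M : ℕ)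
    (hM : M ≤ N) :
    (PalinsMod g N a q).card ≤
      (g ^ (N - M) / Nat.lcm q (g ^ M) + 1) * (g ^ M / Nat.gcd q (g ^ M)) := by
  have hgpos : 0 < g ^ M := by positivity
  refine (Finset.card_le_mul_card_image (f := fun n => n % g ^ M) (PalinsMod g N a q)
    (g ^ (N - M) / Nat.lcm q (g ^ M) + 1) ?_).trans (Nat.mul_le_mul_left _ ?_)
  · intro b _
    set F := (PalinsMod g N a q).filter (fun n => n % g ^ M = b) with hF
    have memF : ∀ n ∈ F, n ∈ PalinsMod g N a q ∧ n % g ^ M = b := fun n hn => by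
      simpa [hF] using hn
    have hdiv : ∀ n ∈ F, ∀ n' ∈ F, n / g ^ (N - M) = n' / g ^ (N - M) := by
      intro n hn n' hn'
      obtain ⟨h1, h2⟩ := memF n hn
      obtain ⟨h1', h2'⟩ := memF n' hn'
      exact palin_top_eq hg hM (Finset.mem_filter.1 h1).1 (Finset.mem_filter.1 h1').1
        (h2.trans h2'.symm)
    have hinj : Set.InjOn (fun n => n % g ^ (N - M)) (F : Set ℕ) := by
      intro n hn n' hn' h
      have h1 : n % g ^ (N - M) = n' % g ^ (N - M) := h
      rw [← Nat.div_add_mod n (g ^ (N - M)), ← Nat.div_add_mod n' (g ^ (N - M)), h1,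
        hdiv n hn n' hn']
    rw [← Finset.card_image_of_injOn hinj]
    apply card_le_of_modEq _ (Nat.lcm q (g ^ M))
    · intro m hm
      obtain ⟨n, -, rfl⟩ := Finset.mem_image.1 hm
      exact (Nat.mod_lt _ (by positivity)).trans
        (Nat.lt_mul_div_succ _ (Nat.lcm_pos hq hgpos))
    · intro m hm m' hm'
      obtain ⟨n, hn, rfl⟩ := Finset.mem_image.1 hm
      obtain ⟨n', hn', rfl⟩ := Finset.mem_image.1 hm'
      have hlcm : n ≡ n' [MOD Nat.lcm q (g ^ M)] := by
        have h1 : n ≡ n' [MOD q] := palinsMod_modEq (memF n hn).1 (memF n' hn').1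
        have h2 : n ≡ n' [MOD g ^ M] := (memF n hn).2.trans (memF n' hn').2.symm
        rw [Nat.modEq_iff_dvd] at h1 h2 ⊢
        rw [Int.natCast_dvd] at h1 h2 ⊢
        exact Nat.lcm_dvd h1 h2
      rw [← Nat.div_add_mod n (g ^ (N - M)), ← Nat.div_add_mod n' (g ^ (N - M)),
        hdiv n hn n' hn'] at hlcm
      exact Nat.ModEq.add_left_cancel' _ hlcm
  · apply card_le_of_modEq _ (Nat.gcd q (g ^ M))
    · intro m hm
      obtain ⟨n, -, rfl⟩ := Finset.mem_image.1 hm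
      rw [Nat.mul_div_cancel' (Nat.gcd_dvd_right _ _)]
      exact Nat.mod_lt _ hgpos
    · intro m hm m' hm'
      obtain ⟨n, hn, rfl⟩ := Finset.mem_image.1 hm
      obtain ⟨n', hn', rfl⟩ := Finset.mem_image.1 hm'
      have h1 : ∀ k : ℕ, k % g ^ M ≡ k [MOD Nat.gcd q (g ^ M)] := fun k =>
        (Nat.mod_modEq k (g ^ M)).of_dvd (Nat.gcd_dvd_right _ _)
      exact (h1 n).trans ((((palinsMod_modEq hn hn').of_dvd (Nat.gcd_dvd_left _ _))).trans
        (h1 n').symm)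

lemma card_palinsMod_le_real (g : ℕ) (hg : 2 ≤ g) (N q : ℕ) (hq : 1 ≤ q) (a : ℤ) (M : ℕ)
    (hM : M ≤ N) :
    ((PalinsMod g N a q).card : ℝ) ≤
      (g : ℝ) ^ (N - M) / q + (g : ℝ) ^ M / (Nat.gcd q (g ^ M) : ℝ) := by
  have hgpos : 0 < g ^ M := by positivity
  have hd : 0 < Nat.gcd q (g ^ M) := Nat.gcd_pos_of_pos_left _ hq
  have hl : 0 < Nat.lcm q (g ^ M) := Nat.lcm_pos hq hgpos
  have hdl : (Nat.gcd q (g ^ M) : ℝ) * (Nat.lcm q (g ^ M) : ℝ) = q * (g : ℝ) ^ M := by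
    exact_mod_cast Nat.gcd_mul_lcm q (g ^ M)
  have h : ((PalinsMod g N a q).card : ℝ) ≤
      ((g ^ (N - M) / Nat.lcm q (g ^ M) : ℕ) + 1) * ((g ^ M / Nat.gcd q (g ^ M) : ℕ) : ℝ) := by
    exact_mod_cast card_palinsMod_le g hg N q hq a M hM
  have e1 : ((g ^ (N - M) / Nat.lcm q (g ^ M) : ℕ) : ℝ) ≤
      (g : ℝ) ^ (N - M) / (Nat.lcm q (g ^ M) : ℝ) := by
    exact_mod_cast Nat.cast_div_le (α := ℝ)
  have e2 : ((g ^ M / Nat.gcd q (g ^ M) : ℕ) : ℝ) ≤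
      (g : ℝ) ^ M / (Nat.gcd q (g ^ M) : ℝ) := by
    exact_mod_cast Nat.cast_div_le (α := ℝ)
  have hq' : (0 : ℝ) < q := by exact_mod_cast hq
  have hd' : (0 : ℝ) < (Nat.gcd q (g ^ M) : ℝ) := by exact_mod_cast hd
  have hl' : (0 : ℝ) < (Nat.lcm q (g ^ M) : ℝ) := by exact_mod_cast hl
  calc ((PalinsMod g N a q).card : ℝ) ≤ _ := h
    _ ≤ ((g : ℝ) ^ (N - M) / (Nat.lcm q (g ^ M) : ℝ) + 1) *
        ((g : ℝ) ^ M / (Nat.gcd q (g ^ M) : ℝ)) := by gcongr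
    _ = (g : ℝ) ^ (N - M) * (g : ℝ) ^ M /
          ((Nat.gcd q (g ^ M) : ℝ) * (Nat.lcm q (g ^ M) : ℝ)) +
          (g : ℝ) ^ M / (Nat.gcd q (g ^ M) : ℝ) := by field_simp
    _ = _ := by
      rw [hdl]
      have : (g : ℝ) ^ M ≠ 0 := by positivity
      field_simp

/-- For `q ≤ g^N` the bound holds without the additive constant; `x` is `g^(N/2) q^(-1/2)`,
characterised by its square. -/
lemma card_palinsMod_le_of_le (g : ℕ) (hg : 2 ≤ g) (N q : ℕ) (hq : 1 ≤ q) (a : ℤ)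
    (hqN : q ≤ g ^ N) (x : ℝ) (hx : 0 < x) (hx2 : x ^ 2 * q = (g : ℝ) ^ N) :
    ((PalinsMod g N a q).card : ℝ) ≤ 2 * g * x := by
  have hq' : (1 : ℝ) ≤ q := by exact_mod_cast hq
  have hg' : (2 : ℝ) ≤ g := by exact_mod_cast hg
  obtain ⟨M, hMN, hPM, hmax⟩ : ∃ M ≤ N, g ^ (2 * M) * q ≤ g ^ N * Nat.gcd q (g ^ M) ∧
      (M + 1 ≤ N → g ^ N ≤ g ^ (2 * (M + 1)) * q) := by
    let P : ℕ → Prop := fun M => g ^ (2 * M) * q ≤ g ^ N * Nat.gcd q (g ^ M)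
    have hP0 : P 0 := by simpa [P] using hqN
    refine ⟨Nat.findGreatest P N, Nat.findGreatest_le N,
      Nat.findGreatest_spec (P := P) (Nat.zero_le N) hP0, fun h => ?_⟩
    have h1 : ¬ P (Nat.findGreatest P N + 1) :=
      Nat.findGreatest_is_greatest (Nat.lt_succ_self _) h
    exact (Nat.le_mul_of_pos_right _ (Nat.gcd_pos_of_pos_left _ hq)).trans (not_le.1 h1).le
  have hcard := card_palinsMod_le_real g hg N q hq a M hMN
  have hd : (1 : ℝ) ≤ (Nat.gcd q (g ^ M) : ℝ) := by
    exact_mod_cast Nat.gcd_pos_of_pos_left (g ^ M) hq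
  set d : ℝ := (Nat.gcd q (g ^ M) : ℝ) with hd_def
  have hG : (0 : ℝ) < (g : ℝ) ^ M := by positivity
  have hsecond : (g : ℝ) ^ M / d ≤ x := by
    have h1 : ((g : ℝ) ^ M) ^ 2 * q ≤ (x ^ 2 * d) * q := by
      have : (g : ℝ) ^ (2 * M) * q ≤ (g : ℝ) ^ N * d := by
        rw [hd_def]
        exact_mod_cast hPM
      rw [← hx2, pow_mul'] at this
      linarith
    have h2 : ((g : ℝ) ^ M) ^ 2 ≤ x ^ 2 * d := le_of_mul_le_mul_right h1 (by linarith)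
    rw [div_le_iff₀ (by linarith)]
    apply le_of_sq_le_sq _ (by positivity)
    rw [mul_pow]
    refine h2.trans ?_
    gcongr
    nlinarith
  have hfirst : (g : ℝ) ^ (N - M) / q ≤ g * x := by
    have hy : (g : ℝ) ^ (N - M) / q * (g : ℝ) ^ M = x ^ 2 := by
      rw [div_mul_eq_mul_div, ← pow_add, Nat.sub_add_cancel hMN, ← hx2]
      field_simp
    by_cases hlast : M + 1 ≤ N
    · have h1 : x ^ 2 * q ≤ ((g : ℝ) ^ (M + 1)) ^ 2 * q := by
        rw [hx2, ← pow_mul, mul_comm (M + 1) 2]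
        exact_mod_cast hmax hlast
      have h2 : x ≤ (g : ℝ) ^ (M + 1) :=
        le_of_sq_le_sq (le_of_mul_le_mul_right h1 (by linarith)) (by positivity)
      apply le_of_mul_le_mul_right _ hG
      rw [hy]
      calc x ^ 2 = x * x := sq x
        _ ≤ x * (g : ℝ) ^ (M + 1) := by gcongr
        _ = g * x * (g : ℝ) ^ M := by ring
    · have hMe : M = N := by omega
      have hx1 : 1 ≤ x := by
        have h1 : (q : ℝ) ≤ (g : ℝ) ^ N := by exact_mod_cast hqN
        rw [← hx2] at h1
        have h2 : (1 : ℝ) ≤ x ^ 2 := by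
          apply le_of_mul_le_mul_right (a := (q : ℝ)) _ (by linarith)
          linarith
        nlinarith
      rw [hMe, Nat.sub_self, pow_zero]
      have : (1 : ℝ) / q ≤ 1 := by
        rw [div_le_one (by linarith)]
        exact hq'
      nlinarith
  nlinarith

theorem palindrome_brun_titchmarsh (g : ℕ) (hg : 2 ≤ g) :
    ∃ C : ℝ, 0 < C ∧ ∀ N q : ℕ, 1 ≤ N → 1 ≤ q → ∀ a : ℤ,
      (¬ ((q : ℤ) ∣ a) →
        ((PalinsMod g N a q).card : ℝ) ≤
          C * ((g : ℝ) ^ ((N : ℝ) / 2) * (q : ℝ) ^ (-(1 / 2 : ℝ)) + 1)) ∧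
      ((q : ℤ) ∣ a →
        ((PalinsMod g N a q).card : ℝ) ≤
          C * (g : ℝ) ^ ((N : ℝ) / 2) * (q : ℝ) ^ (-(1 / 2 : ℝ))) := by
  have hg' : (2 : ℝ) ≤ g := by exact_mod_cast hg
  refine ⟨2 * g, by positivity, fun N q _ hq a => ?_⟩
  have hq' : (0 : ℝ) < q := by exact_mod_cast hq
  have hx : 0 < (g : ℝ) ^ ((N : ℝ) / 2) * (q : ℝ) ^ (-(1 / 2 : ℝ)) := by positivity
  have hx2 : ((g : ℝ) ^ ((N : ℝ) / 2) * (q : ℝ) ^ (-(1 / 2 : ℝ))) ^ 2 * q = (g : ℝ) ^ N := by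
    rw [mul_pow, ← Real.rpow_natCast, ← Real.rpow_natCast, ← Real.rpow_mul (by positivity),
      ← Real.rpow_mul hq'.le]
    norm_num
    rw [Real.rpow_neg_one]
    field_simp
  rw [mul_assoc (2 * (g : ℝ))]
  set x := (g : ℝ) ^ ((N : ℝ) / 2) * (q : ℝ) ^ (-(1 / 2 : ℝ))
  have hlt : ∀ n ∈ PalinsMod g N a q, 1 ≤ n ∧ n < g ^ N := fun n hn =>
    Finset.mem_Ico.1 (Finset.mem_filter.1 (Finset.mem_filter.1 hn).1).1
  by_cases hqN : q ≤ g ^ N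
  · have h := card_palinsMod_le_of_le g hg N q hq a hqN x hx hx2
    exact ⟨fun _ => by linarith, fun _ => h⟩
  · rw [not_le] at hqN
    constructor
    · intro _
      have h1 : (PalinsMod g N a q).card ≤ 1 := by
        apply card_le_of_modEq _ q 1
        · intro m hm
          rw [mul_one]
          exact (hlt m hm).2.trans hqN
        · intro m hm m' hm'
          exact palinsMod_modEq hm hm'
      have h2 : ((PalinsMod g N a q).card : ℝ) ≤ 1 := by exact_mod_cast h1
      nlinarith
    · intro ha
      have h0 : PalinsMod g N a q = ∅ := by
        rw [Finset.eq_empty_iff_forall_notMem]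
        intro n hn
        have h1 := (Finset.mem_filter.1 hn).2
        rw [Int.emod_eq_zero_of_dvd ha] at h1
        have h2 : q ∣ n := by exact_mod_cast Int.dvd_of_emod_eq_zero h1
        have h3 := Nat.le_of_dvd (hlt n hn).1 h2
        have h4 := (hlt n hn).2
        omega
      rw [h0]
      simp only [Finset.card_empty, Nat.cast_zero]
      positivity
end
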